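/- arXiv:1912.08328 — 2 statements merged into one kernel-verified Lean document; each statement's English description precedes it below -/
import Mathlib

section
/- Let G and H be graphs and r ≥ 2 an integer such that G →_r H. Then there exist constants a = a(G,H,r) > 0 and b = b(H,r) > 1, where b does not depend on G, such that for every positive integer t, the blowup Ramsey number satisfies B_r(G → H; t) ≤ a · b^t. -/
/-- The `n`-blowup of a graph: each vertex is replaced by an independent set of `n` vertices,
and each edge by a complete bipartite graph between the corresponding sets. -/
def blowupGraph {V : Type} (G : SimpleGraph V) (n : ℕ) : SimpleGraph (V × Fin n) :=
  SimpleGraph.comap Prod.fst G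

/-- The coloring `C` admits a monochromatic copy of `H` in `G`. -/
def HasMonoCopy {V α : Type} (G : SimpleGraph V) (H : SimpleGraph α) {r : ℕ}
    (C : Sym2 V → Fin r) : Prop :=
  ∃ (f : α → V) (c : Fin r), Function.Injective f ∧
    ∀ a b, H.Adj a b → G.Adj (f a) (f b) ∧ C s(f a, f b) = c

/-- `G →_r H`: every `r`-coloring of the edges of `G` contains a monochromatic copy of `H`. -/
def ArrowsFor {V α : Type} (G : SimpleGraph V) (H : SimpleGraph α) (r : ℕ) : Prop :=
  ∀ C : Sym2 V → Fin r, HasMonoCopy G H C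

/-- The coloring `C` of `G[n]` admits a monochromatic canonical copy of `H[t]`:
an embedding `φ` of `H` into `G`, together with `t` blowup vertices `ψ a` in the part indexed
by `φ a` for each vertex `a` of `H`, all of whose blowup edges receive the same color `c`. -/
def HasMonoCanonicalBlowup {V α : Type} (G : SimpleGraph V) (H : SimpleGraph α)
    (n t r : ℕ) (C : Sym2 (V × Fin n) → Fin r) : Prop :=
  ∃ (φ : α → V) (ψ : α → Fin t → Fin n) (c : Fin r),
    Function.Injective φ ∧ (∀ a, Function.Injective (ψ a)) ∧
    ∀ a b, H.Adj a b → G.Adj (φ a) (φ b) ∧ ∀ i j, C s((φ a, ψ a i), (φ b, ψ b j)) = c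

/-- Every `r`-coloring of the edges of `G[n]` contains a monochromatic canonical copy of `H[t]`.
The blowup Ramsey number `B_r(G → H; t)` is the minimum such `n`. -/
def BlowupArrow {V α : Type} (G : SimpleGraph V) (H : SimpleGraph α) (r n t : ℕ) : Prop :=
  ∀ C : Sym2 (V × Fin n) → Fin r, HasMonoCanonicalBlowup G H n t r C

/-!
Inside the parts of `G[n]` choose nonempty sets `U v` maximizing the potential
`∑ d_c(U v, U w) ^ 2 + l * ∑ log #(U v)`, where `d_c` is the density of color `c`. Replacing a part
by one of two complementary pieces raises the mean square density if the densities of the pieces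
differ, whereas the logarithmic term loses only `l` on average; so at the maximum every pair is
`ε`-regular in every color. Comparison with the full parts gives `#(U v) ≥ n / a`, with `a`
depending on `G`. Coloring each pair of vertices of `G` by a majority color of its parts yields a
monochromatic copy of `H` in `G`, all of whose pairs of parts are regular and have density at least
`1 / r` in one color `c`.

By the counting lemma, a proportion `γ = γ(H, r)` of all transversals of these parts are copies of
`H` in color `c`. A dense `k`-partite `k`-uniform hypergraph with parts of size `B ^ t` need not
contain a complete `k`-partite subhypergraph with parts of size `t`, but its shadow contains a
`t`-blowup of `K_k`, by induction on `k` with a bipartite Kővári–Sós–Turán argument at each step. In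
the hypergraph of copies of `H` this is a canonical copy of `H[t]`. The base `B` depends only on
`γ` and `k`, and `G` enters only through `a`.
-/

section

open Finset

lemma half_mul_card_le_card_filter {ι : Type*} (s : Finset ι) (f : ι → ℝ) {c δ : ℝ} (hc : 0 < c)
    (hδ : 0 ≤ δ) (hf : ∀ i ∈ s, f i ≤ c) (hsum : δ * c * #s ≤ ∑ i ∈ s, f i) :
    δ / 2 * #s ≤ #{i ∈ s | δ / 2 * c ≤ f i} := by
  have hle : ∑ i ∈ s, f i ≤ c * #{i ∈ s | δ / 2 * c ≤ f i} + δ / 2 * c * #s := by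
    calc ∑ i ∈ s, f i ≤ ∑ i ∈ s, ((if δ / 2 * c ≤ f i then c else 0) + δ / 2 * c) := by
          refine sum_le_sum fun i hi => ?_
          have := hf i hi
          split_ifs with h
          · nlinarith
          · linarith
      _ = _ := by
          rw [sum_add_distrib, ← sum_filter, sum_const, sum_const]
          simp only [nsmul_eq_mul]
          ring
  refine le_of_mul_le_mul_left ?_ hc
  linarith

lemma half_mul_card_le_card_filter_degree {ι W : Type*} [Fintype ι] [Nonempty ι] (T : Finset W)
    (rel : ι → W → Prop) [∀ i v, Decidable (rel i v)] {δ : ℝ} (hδ : 0 ≤ δ)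
    (hdeg : ∀ i, δ * #T ≤ #{v ∈ T | rel i v}) :
    δ / 2 * #T ≤ #{v ∈ T | δ / 2 * Fintype.card ι ≤ #{i | rel i v}} := by
  refine half_mul_card_le_card_filter T (fun v => (#{i | rel i v} : ℝ))
    (Nat.cast_pos.2 Fintype.card_pos) hδ (fun v _ => Nat.cast_le.2 (card_le_univ _)) ?_
  have hdouble : ∑ i, #{v ∈ T | rel i v} = ∑ v ∈ T, #{i | rel i v} :=
    sum_card_bipartiteAbove_eq_sum_card_bipartiteBelow rel
  calc δ * Fintype.card ι * #T = ∑ _i : ι, δ * #T := by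
        rw [sum_const, card_univ, nsmul_eq_mul]
        ring
    _ ≤ ∑ i, (#{v ∈ T | rel i v} : ℝ) := sum_le_sum fun i _ => hdeg i
    _ = ∑ v ∈ T, (#{i | rel i v} : ℝ) := mod_cast hdouble

theorem exists_completeBipartite_of_dense {ι W : Type*} [Fintype ι] (T : Finset W)
    (rel : ι → W → Prop) [∀ i v, Decidable (rel i v)] {δ : ℝ} {t : ℕ}
    (hdeg : ∀ i, δ * #T ≤ #{v ∈ T | rel i v}) (hι : 2 * t ≤ δ * Fintype.card ι)
    (hT : 2 * (t * 2 ^ Fintype.card ι) ≤ δ * #T) :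
    ∃ (f : Fin t ↪ ι) (g : Fin t ↪ W), (∀ s, g s ∈ T) ∧ ∀ s s', rel (f s) (g s') := by
  classical
  rcases t.eq_zero_or_pos with rfl | ht
  · exact ⟨.ofIsEmpty, .ofIsEmpty, fun s => s.elim0, fun s => s.elim0⟩
  have hδι : 0 < δ * Fintype.card ι := by
    have : (0 : ℝ) < t := Nat.cast_pos.2 ht
    linarith
  have hδ : 0 < δ := pos_of_mul_pos_left hδι (Nat.cast_nonneg _)
  have : Nonempty ι :=
    Fintype.card_pos_iff.1 (Nat.cast_pos.1 (pos_of_mul_pos_right hδι hδ.le))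
  let N : W → Finset ι := fun v => {i | rel i v}
  let good : Finset W := {v ∈ T | δ / 2 * Fintype.card ι ≤ #(N v)}
  have hgood : t * 2 ^ Fintype.card ι ≤ #good := by
    have : δ / 2 * #T ≤ #good := half_mul_card_le_card_filter_degree T rel hδ.le hdeg
    have : (t * 2 ^ Fintype.card ι : ℝ) ≤ #good := by linarith
    exact_mod_cast this
  -- The traces `N v` take at most `2 ^ #ι` values, so `t` of the good `v` share one of them.
  obtain ⟨S, -, hS⟩ : ∃ S ∈ (univ : Finset (Finset ι)), t ≤ #{v ∈ good | N v = S} := by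
    refine exists_le_card_fiber_of_mul_le_card_of_maps_to (fun _ _ => mem_univ _) univ_nonempty ?_
    rwa [card_univ, Fintype.card_finset, mul_comm]
  have hSt : t ≤ #S := by
    obtain ⟨v, hv⟩ := card_pos.1 (ht.trans_le hS)
    obtain ⟨hv, hNv⟩ := mem_filter.1 hv
    have := (mem_filter.1 hv).2
    rw [hNv] at this
    exact_mod_cast (by linarith : (t : ℝ) ≤ #S)
  obtain ⟨f, hf⟩ := Function.Embedding.exists_of_card_le_finset (α := Fin t) (by simpa using hSt)
  obtain ⟨g, hg⟩ := Function.Embedding.exists_of_card_le_finset (α := Fin t) (by simpa using hS)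
  have hgood_g (s : Fin t) : g s ∈ good ∧ N (g s) = S := mem_filter.1 (hg ⟨s, rfl⟩)
  refine ⟨f, g, fun s => (mem_filter.1 (hgood_g s).1).1, fun s s' => ?_⟩
  have hfN : f s ∈ N (g s') := (hgood_g s').2 ▸ hf ⟨s, rfl⟩
  exact (mem_filter.1 hfN).2

section Tuples

variable {k : ℕ} {W : Fin (k + 1) → Type*} [∀ i, DecidableEq (W i)] {U : ∀ i, Finset (W i)}
  {M : Finset (∀ i, W i)}

lemma card_eq_card_filter_cons_mem (hM : M ⊆ Fintype.piFinset U) :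
    #M = #{p ∈ U 0 ×ˢ Fintype.piFinset (Fin.tail U) | Fin.cons p.1 p.2 ∈ M} := by
  rw [← card_map (Fin.consEquiv W).symm.toEmbedding]
  congr 1
  ext p
  simp only [mem_map_equiv, Equiv.symm_symm, mem_filter, mem_product]
  refine ⟨fun hp => ⟨?_, hp⟩, fun hp => hp.2⟩
  simpa [Fin.consEquiv] using Fin.mem_piFinset_iff_zero_tail.1 (hM hp)

lemma card_eq_sum_card_heads (hM : M ⊆ Fintype.piFinset U) :
    #M = ∑ y ∈ Fintype.piFinset (Fin.tail U), #{v ∈ U 0 | Fin.cons v y ∈ M} := by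
  simp only [card_eq_card_filter_cons_mem hM, card_filter, sum_product_right]

lemma card_eq_sum_card_tails (hM : M ⊆ Fintype.piFinset U) :
    #M = ∑ v ∈ U 0, #{y ∈ Fintype.piFinset (Fin.tail U) | Fin.cons v y ∈ M} := by
  simp only [card_eq_card_filter_cons_mem hM, card_filter, sum_product]

lemma half_mul_card_tails_le {δ : ℝ} (hδ : 0 ≤ δ) (hU : (U 0).Nonempty)
    (hM : M ⊆ Fintype.piFinset U) (hdense : δ * #(Fintype.piFinset U) ≤ #M) :
    δ / 2 * #(Fintype.piFinset (Fin.tail U)) ≤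
      #{y ∈ Fintype.piFinset (Fin.tail U) | δ / 2 * #(U 0) ≤ #{v ∈ U 0 | Fin.cons v y ∈ M}} := by
  refine half_mul_card_le_card_filter _ (fun y => (#{v ∈ U 0 | Fin.cons v y ∈ M} : ℝ))
    (Nat.cast_pos.2 (card_pos.2 hU)) hδ (fun y _ => Nat.cast_le.2 (card_filter_le _ _)) ?_
  rw [Fintype.card_piFinset, Fin.prod_univ_succ, card_eq_sum_card_heads hM] at hdense
  rw [Fintype.card_piFinset, mul_assoc]
  exact_mod_cast hdense

end Tuples

section Shadow

variable {W : Type*} {k t : ℕ}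

/-- The tuples `X s`, which are edges of the `k`-partite `k`-uniform hypergraph `M`, form a
`t`-blowup of `K_k` in its shadow: any two of their entries in different parts lie in a common
edge of `M`. -/
structure IsShadowBlowup (M : Finset (Fin k → W)) (X : Fin t → Fin k → W) : Prop where
  mem : ∀ s, X s ∈ M
  injective : ∀ i, Function.Injective fun s => X s i
  exists_mem : ∀ ⦃i j⦄, i ≠ j → ∀ s s', ∃ x ∈ M, x i = X s i ∧ x j = X s' j

lemma IsShadowBlowup.cons {m : ℕ} {M : Finset (Fin (k + 1) → W)} {R : Finset (Fin k → W)}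
    {Q : Fin m → Fin k → W} (hQ : IsShadowBlowup R Q)
    (hR : ∀ y ∈ R, ∃ v, (Fin.cons v y : Fin (k + 1) → W) ∈ M) {f : Fin t ↪ Fin m} {g : Fin t ↪ W}
    (hfg : ∀ s s', (Fin.cons (g s') (Q (f s)) : Fin (k + 1) → W) ∈ M) :
    IsShadowBlowup M fun s => (Fin.cons (g s) (Q (f s)) : Fin (k + 1) → W) where
  mem s := hfg s s
  injective i := by
    cases i using Fin.cases with
    | zero => simpa using g.injective
    | succ i => simpa [Function.comp_def] using (hQ.injective i).comp f.injective
  exists_mem i j hij s s' := by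
    cases i using Fin.cases with
    | zero =>
      cases j using Fin.cases with
      | zero => exact absurd rfl hij
      | succ j => exact ⟨_, hfg s' s, rfl, rfl⟩
    | succ i =>
      cases j using Fin.cases with
      | zero => exact ⟨_, hfg s s', rfl, rfl⟩
      | succ j =>
        obtain ⟨y, hyR, hyi, hyj⟩ := hQ.exists_mem (ne_of_apply_ne _ hij) (f s) (f s')
        obtain ⟨v, hv⟩ := hR y hyR
        exact ⟨_, hv, by simpa using hyi, by simpa using hyj⟩

lemma mul_mul_two_pow_le_pow (D t : ℕ) : D * (t * 2 ^ (D * t)) ≤ ((D + 1) * 2 ^ D) ^ t := by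
  have hDt : D * t ≤ (D + 1) ^ t := by
    have : (1 : ℤ) + t * D ≤ (1 + D) ^ t := one_add_mul_le_pow (by lia) t
    rw [add_comm 1 (D : ℤ)] at this
    zify
    linarith
  calc D * (t * 2 ^ (D * t)) = D * t * 2 ^ (D * t) := by ring
    _ ≤ (D + 1) ^ t * 2 ^ (D * t) := Nat.mul_le_mul_right _ hDt
    _ = ((D + 1) * 2 ^ D) ^ t := by rw [mul_pow, ← pow_mul]

theorem exists_isShadowBlowup (k : ℕ) {δ : ℝ} (hδ : 0 < δ) :
    ∃ B : ℕ, 1 < B ∧ ∀ {W : Type*} (t : ℕ) (U : Fin k → Finset W) (M : Finset (Fin k → W)),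
      M ⊆ Fintype.piFinset U → δ * #(Fintype.piFinset U) ≤ #M → (∀ i, B ^ t ≤ #(U i)) →
        ∃ X : Fin t → Fin k → W, IsShadowBlowup M X := by
  classical
  induction k generalizing δ with
  | zero =>
    refine ⟨2, one_lt_two, fun t U M _ hdense _ => ?_⟩
    have hM : (0 : ℝ) < #M := hδ.trans_le (by simpa using hdense)
    obtain ⟨x, hx⟩ := card_pos.1 (Nat.cast_pos.1 hM)
    exact ⟨fun _ => x, fun _ => hx, fun i => i.elim0, fun i => i.elim0⟩
  | succ k ih =>
    obtain ⟨B, hB, ih⟩ := ih (half_pos hδ)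
    obtain ⟨D, hD⟩ := exists_nat_ge (4 / δ)
    have hDδ : 4 ≤ δ * D := (div_le_iff₀' hδ).1 hD
    have hD0 : D ≠ 0 := by
      rintro rfl
      norm_num at hDδ
    refine ⟨B ^ D * ((D + 1) * 2 ^ D), ?_, fun {W} t U M hMU hdense hU => ?_⟩
    · exact lt_of_lt_of_le (Nat.one_lt_pow hD0 hB) (Nat.le_mul_of_pos_right _ (by positivity))
    have hU0 : (U 0).Nonempty := card_pos.1 (lt_of_lt_of_le (by positivity) (hU 0))
    -- The tails with many heads contain a `D * t`-blowup, and a dense bipartite graph joins its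
    -- tuples to the part `U 0`; so `t` of these tuples have `t` common heads.
    obtain ⟨Q, hQ⟩ := ih (D * t) (Fin.tail U) _ (filter_subset _ _)
      (half_mul_card_tails_le hδ.le hU0 hMU hdense) fun i => by
        calc B ^ (D * t) = (B ^ D) ^ t := pow_mul ..
          _ ≤ _ := Nat.pow_le_pow_left (Nat.le_mul_of_pos_right _ (by positivity)) t
          _ ≤ #(U i.succ) := hU i.succ
    have hcard : (D : ℝ) * (t * 2 ^ (D * t)) ≤ #(U 0) := by
      exact_mod_cast (mul_mul_two_pow_le_pow D t).trans
        ((Nat.pow_le_pow_left (Nat.le_mul_of_pos_left _ (by positivity)) t).trans (hU 0))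
    obtain ⟨f, g, -, hfg⟩ := exists_completeBipartite_of_dense (t := t) (U 0)
      (fun s v => (Fin.cons v (Q s) : Fin (k + 1) → W) ∈ M)
      (fun s => (mem_filter.1 (hQ.mem s)).2)
      (by
        rw [Fintype.card_fin]
        push_cast
        nlinarith [(Nat.cast_nonneg t : (0 : ℝ) ≤ t)])
      (by
        rw [Fintype.card_fin]
        nlinarith [(by positivity : (0 : ℝ) ≤ t * 2 ^ (D * t))])
    refine ⟨_, hQ.cons (fun y hy => ?_) hfg⟩
    have hpos : 0 < δ / 2 * #(U 0) := mul_pos (half_pos hδ) (Nat.cast_pos.2 (card_pos.2 hU0))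
    obtain ⟨v, hv⟩ := card_pos.1 (Nat.cast_pos.1 (hpos.trans_le (mem_filter.1 hy).2))
    exact ⟨v, (mem_filter.1 hv).2⟩

end Shadow

section BiDense

variable {W : Type*} {Γ : SimpleGraph W} [DecidableRel Γ.Adj] {ε δ : ℝ} {s t : Finset W}

/-- The one-sided form of `ε`-regularity that suffices for counting: between any `X ⊆ s` and
`Y ⊆ t` that take up at least an `ε`-fraction of `s` and `t`, the edge density is at least `δ`. -/
def BiDense (Γ : SimpleGraph W) [DecidableRel Γ.Adj] (ε δ : ℝ) (s t : Finset W) : Prop :=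
  ∀ ⦃X⦄, X ⊆ s → ∀ ⦃Y⦄, Y ⊆ t → #s * ε ≤ #X → #t * ε ≤ #Y → δ ≤ Γ.edgeDensity X Y

lemma BiDense.of_isUniform (h : Γ.IsUniform ε s t) (hδ : δ + ε ≤ Γ.edgeDensity s t) :
    BiDense Γ ε δ s t := fun X hX Y hY hXs hYt => by
  linarith [(abs_lt.1 (h hX hY hXs hYt)).1]

lemma BiDense.mono {ε' : ℝ} (h : BiDense Γ ε δ s t) (hε : ε ≤ ε') : BiDense Γ ε' δ s t :=
  fun _ hX _ hY hXs hYt => h hX hY ((mul_le_mul_of_nonneg_left hε (Nat.cast_nonneg _)).trans hXs)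
    ((mul_le_mul_of_nonneg_left hε (Nat.cast_nonneg _)).trans hYt)

lemma BiDense.restrict {η : ℝ} {s' t' : Finset W} (h : BiDense Γ (ε * η) δ s t) (hε : 0 ≤ ε)
    (hs : s' ⊆ s) (ht : t' ⊆ t) (hs' : η * #s ≤ #s') (ht' : η * #t ≤ #t') :
    BiDense Γ ε δ s' t' := fun _ hX _ hY hXs hYt =>
  h (hX.trans hs) (hY.trans ht) (by nlinarith) (by nlinarith)

lemma card_interedges_eq_sum_degree (Γ : SimpleGraph W) [DecidableRel Γ.Adj] (s t : Finset W) :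
    #(Γ.interedges s t) = ∑ v ∈ s, #{w ∈ t | Γ.Adj v w} := by
  simp only [SimpleGraph.interedges_def, card_filter, sum_product]

lemma BiDense.card_lowDegree_le (h : BiDense Γ ε δ s t) (hε₀ : 0 ≤ ε) (hε₁ : ε ≤ 1) :
    (#{v ∈ s | #{w ∈ t | Γ.Adj v w} < δ * #t} : ℝ) ≤ ε * #s := by
  by_contra! hlt
  set X := {v ∈ s | #{w ∈ t | Γ.Adj v w} < δ * #t}
  have hX : X.Nonempty := card_pos.1 (Nat.cast_pos.1 ((by positivity : 0 ≤ ε * #s).trans_lt hlt))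
  have hsum : (#(Γ.interedges X t) : ℝ) < δ * (#X * #t) := by
    calc (#(Γ.interedges X t) : ℝ) = ∑ v ∈ X, (#{w ∈ t | Γ.Adj v w} : ℝ) := by
          rw [card_interedges_eq_sum_degree, Nat.cast_sum]
      _ < ∑ _v ∈ X, δ * #t := sum_lt_sum_of_nonempty hX fun _ hv => (mem_filter.1 hv).2
      _ = δ * (#X * #t) := by
          rw [sum_const, nsmul_eq_mul]
          ring
  have hdens := h (filter_subset _ _) Subset.rfl (by linarith)
    (mul_le_of_le_one_right (Nat.cast_nonneg _) hε₁)
  rw [SimpleGraph.edgeDensity_def] at hdens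
  push_cast at hdens
  exact hsum.not_ge (mul_le_of_le_div₀ (Nat.cast_nonneg _) (by positivity) hdens)

end BiDense

section Counting

variable {W : Type*} {k : ℕ} {Γ : SimpleGraph W} {ε δ : ℝ}

open scoped Classical in
/-- The homomorphisms from `H` to `Γ` that map each vertex `i` into the part `U i`. -/
noncomputable def partiteHoms (Γ : SimpleGraph W) (H : SimpleGraph (Fin k)) (U : Fin k → Finset W) :
    Finset (Fin k → W) :=
  {x ∈ Fintype.piFinset U | ∀ i j, H.Adj i j → Γ.Adj (x i) (x j)}

open scoped Classical in
/-- The parts in which a homomorphism from `H` to `Γ` respecting `U` and mapping `0` to `v` has its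
remaining values. -/
noncomputable def linkParts (Γ : SimpleGraph W) (H : SimpleGraph (Fin (k + 1)))
    (U : Fin (k + 1) → Finset W) (v : W) : Fin k → Finset W :=
  fun j => {w ∈ U j.succ | H.Adj 0 j.succ → Γ.Adj v w}

lemma mem_partiteHoms {H : SimpleGraph (Fin k)} {U : Fin k → Finset W} {x : Fin k → W} :
    x ∈ partiteHoms Γ H U ↔ (∀ i, x i ∈ U i) ∧ ∀ i j, H.Adj i j → Γ.Adj (x i) (x j) := by
  simp only [partiteHoms, mem_filter, Fintype.mem_piFinset]

lemma partiteHoms_subset (H : SimpleGraph (Fin k)) (U : Fin k → Finset W) :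
    partiteHoms Γ H U ⊆ Fintype.piFinset U :=
  fun _ hx => Fintype.mem_piFinset.2 (mem_partiteHoms.1 hx).1

variable {H : SimpleGraph (Fin (k + 1))} {U : Fin (k + 1) → Finset W}

lemma mem_linkParts {v w : W} {j : Fin k} :
    w ∈ linkParts Γ H U v j ↔ w ∈ U j.succ ∧ (H.Adj 0 j.succ → Γ.Adj v w) := by
  simp only [linkParts, mem_filter]

lemma linkParts_subset (v : W) (j : Fin k) : linkParts Γ H U v j ⊆ U j.succ :=
  fun _ hw => (mem_linkParts.1 hw).1

lemma cons_mem_partiteHoms {v : W} {y : Fin k → W} (hv : v ∈ U 0)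
    (hy : y ∈ partiteHoms Γ (H.comap Fin.succ) (linkParts Γ H U v)) :
    (Fin.cons v y : Fin (k + 1) → W) ∈ partiteHoms Γ H U := by
  obtain ⟨hyU, hyΓ⟩ := mem_partiteHoms.1 hy
  have hlink (j : Fin k) : y j ∈ U j.succ ∧ (H.Adj 0 j.succ → Γ.Adj v (y j)) :=
    mem_linkParts.1 (hyU j)
  refine mem_partiteHoms.2 ⟨Fin.cases hv fun j => (hlink j).1, fun i j hij => ?_⟩
  cases i using Fin.cases with
  | zero =>
    cases j using Fin.cases with
    | zero => exact absurd rfl hij.ne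
    | succ j => exact (hlink j).2 hij
  | succ i =>
    cases j using Fin.cases with
    | zero => exact ((hlink i).2 hij.symm).symm
    | succ j => exact hyΓ i j hij

lemma sum_card_partiteHoms_le {A : Finset W} (hA : A ⊆ U 0) :
    ∑ v ∈ A, #(partiteHoms Γ (H.comap Fin.succ) (linkParts Γ H U v)) ≤ #(partiteHoms Γ H U) := by
  classical
  rw [card_eq_sum_card_tails (partiteHoms_subset H U)]
  refine (sum_le_sum fun v hv => card_le_card fun y hy => mem_filter.2
    ⟨?_, cons_mem_partiteHoms (hA hv) hy⟩).trans (sum_le_sum_of_subset hA)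
  exact Fintype.piFinset_subset _ _ (linkParts_subset v) (partiteHoms_subset _ _ hy)

lemma card_small_linkPart_le [DecidableRel Γ.Adj] {j : Fin k}
    (hdense : H.Adj 0 j.succ → BiDense Γ ε δ (U 0) (U j.succ)) (hε₀ : 0 ≤ ε) (hε₁ : ε ≤ 1)
    (hδ : δ ≤ 1) : (#{v ∈ U 0 | #(linkParts Γ H U v j) < δ * #(U j.succ)} : ℝ) ≤ ε * #(U 0) := by
  classical
  by_cases hj : H.Adj 0 j.succ
  · have hlink (v : W) : linkParts Γ H U v j = {w ∈ U j.succ | Γ.Adj v w} := by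
      ext w
      simp [mem_linkParts, hj]
    simp only [hlink]
    convert (hdense hj).card_lowDegree_le hε₀ hε₁
  · rw [filter_false_of_mem fun v _ => ?_]
    · simpa using by positivity
    · have hall : linkParts Γ H U v j = U j.succ :=
        (linkParts_subset v j).antisymm fun _ hw => mem_linkParts.2 ⟨hw, fun h => absurd h hj⟩
      rw [hall, not_lt]
      exact mul_le_of_le_one_left (Nat.cast_nonneg _) hδ

open scoped Classical in
lemma half_card_le_card_large_linkParts [DecidableRel Γ.Adj]
    (hdense : ∀ j, H.Adj 0 (Fin.succ j) → BiDense Γ ε δ (U 0) (U j.succ)) (hε₀ : 0 ≤ ε)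
    (hε₁ : ε ≤ 1) (hkε : k * ε ≤ 1 / 2) (hδ : δ ≤ 1) :
    (#(U 0) : ℝ) / 2 ≤ #{v ∈ U 0 | ∀ j, δ * #(U j.succ) ≤ #(linkParts Γ H U v j)} := by
  have hbad : (#{v ∈ U 0 | ¬ ∀ j, δ * #(U j.succ) ≤ #(linkParts Γ H U v j)} : ℝ) ≤ #(U 0) / 2 := by
    calc _ ≤ (#(univ.biUnion fun j =>
            {v ∈ U 0 | #(linkParts Γ H U v j) < δ * #(U j.succ)}) : ℝ) := by
          refine Nat.cast_le.2 (card_le_card fun v hv => ?_)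
          simpa using hv
      _ ≤ ∑ j : Fin k, (#{v ∈ U 0 | #(linkParts Γ H U v j) < δ * #(U j.succ)} : ℝ) :=
          mod_cast card_biUnion_le
      _ ≤ ∑ _j : Fin k, ε * #(U 0) :=
          sum_le_sum fun j _ => card_small_linkPart_le (hdense j) hε₀ hε₁ hδ
      _ = k * ε * #(U 0) := by
          rw [sum_const, card_univ, Fintype.card_fin, nsmul_eq_mul]
          ring
      _ ≤ #(U 0) / 2 := by nlinarith [(Nat.cast_nonneg #(U 0) : (0 : ℝ) ≤ _)]
  have hsplit := card_filter_add_card_filter_not (s := U 0)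
    (fun v => ∀ j, δ * #(U (Fin.succ j)) ≤ #(linkParts Γ H U v j))
  rify at hsplit
  linarith

lemma pow_mul_card_piFinset_le {U U' : Fin k → Finset W} (hδ : 0 ≤ δ)
    (h : ∀ i, δ * #(U i) ≤ #(U' i)) :
    δ ^ k * (#(Fintype.piFinset U) : ℝ) ≤ #(Fintype.piFinset U') := by
  simp only [Fintype.card_piFinset, Nat.cast_prod]
  calc δ ^ k * ∏ i, (#(U i) : ℝ) = ∏ i, δ * #(U i) := by
        rw [prod_mul_distrib, prod_const, card_univ, Fintype.card_fin]
    _ ≤ ∏ i, (#(U' i) : ℝ) := prod_le_prod (fun _ _ => by positivity) fun i _ => h i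

theorem exists_mul_card_piFinset_le_card_partiteHoms (k : ℕ) {δ : ℝ} (hδ₀ : 0 < δ) (hδ₁ : δ ≤ 1) :
    ∃ ε > 0, ∃ γ > 0, ∀ {W : Type*} (Γ : SimpleGraph W) [DecidableRel Γ.Adj]
      (H : SimpleGraph (Fin k)) (U : Fin k → Finset W),
        (∀ i j, H.Adj i j → BiDense Γ ε δ (U i) (U j)) →
          γ * (#(Fintype.piFinset U) : ℝ) ≤ #(partiteHoms Γ H U) := by
  classical
  induction k with
  | zero => exact ⟨1, one_pos, 1, one_pos, fun Γ _ H U _ => by simp [partiteHoms]⟩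
  | succ k ih =>
    obtain ⟨ε', hε', γ, hγ, ih⟩ := ih
    set ε : ℝ := min (ε' * δ) (1 / (2 * (k + 1)))
    have hε₀ : 0 < ε := by positivity
    have hkε : (k + 1) * ε ≤ 1 / 2 := by
      calc (k + 1) * ε ≤ (k + 1) * (1 / (2 * (k + 1))) := by
            gcongr
            exact min_le_right _ _
        _ = 1 / 2 := by field_simp
    refine ⟨ε, hε₀, γ * δ ^ k / 2, by positivity, fun {W} Γ _ H U hdense => ?_⟩
    set good := {v ∈ U 0 | ∀ j, δ * #(U j.succ) ≤ #(linkParts Γ H U v j)}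
    have hgood : (#(U 0) : ℝ) / 2 ≤ #good :=
      half_card_le_card_large_linkParts (fun j => hdense 0 j.succ) hε₀.le (by nlinarith)
        (by nlinarith) hδ₁
    set c : ℝ := γ * (δ ^ k * #(Fintype.piFinset (Fin.tail U)))
    have hlink : ∀ v ∈ good, c ≤ #(partiteHoms Γ (H.comap Fin.succ) (linkParts Γ H U v)) := by
      intro v hv
      have hv := (mem_filter.1 hv).2
      calc c ≤ γ * #(Fintype.piFinset (linkParts Γ H U v)) :=
            mul_le_mul_of_nonneg_left (pow_mul_card_piFinset_le hδ₀.le hv) hγ.le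
        _ ≤ _ := ih Γ _ _ fun i j hij => ((hdense _ _ hij).mono (min_le_left _ _)).restrict
            hε'.le (linkParts_subset v i) (linkParts_subset v j) (hv i) (hv j)
    have hsum := sum_card_partiteHoms_le (Γ := Γ) (H := H) (filter_subset _ _ : good ⊆ U 0)
    calc γ * δ ^ k / 2 * (#(Fintype.piFinset U) : ℝ) = #(U 0) / 2 * c := by
          simp only [c, Fintype.card_piFinset, Fin.prod_univ_succ, Fin.tail]
          push_cast
          ring
      _ ≤ #good * c := mul_le_mul_of_nonneg_right hgood (by positivity)
      _ ≤ ∑ v ∈ good, (#(partiteHoms Γ (H.comap Fin.succ) (linkParts Γ H U v)) : ℝ) := by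
          simpa only [nsmul_eq_mul] using card_nsmul_le_sum good _ c hlink
      _ ≤ #(partiteHoms Γ H U) := mod_cast hsum

end Counting

theorem exists_blowup_of_biDense (α : Type*) [Finite α] {δ : ℝ} (hδ₀ : 0 < δ) (hδ₁ : δ ≤ 1) :
    ∃ ε > 0, ∃ B : ℕ, 1 < B ∧ ∀ {W : Type*} (Γ : SimpleGraph W) [DecidableRel Γ.Adj]
      (H : SimpleGraph α) (U : α → Finset W) (t : ℕ),
        (∀ a b, H.Adj a b → BiDense Γ ε δ (U a) (U b)) → (∀ a, B ^ t ≤ #(U a)) →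
          ∃ X : α → Fin t → W, (∀ a, Function.Injective (X a)) ∧ (∀ a s, X a s ∈ U a) ∧
            ∀ a b, H.Adj a b → ∀ s s', Γ.Adj (X a s) (X b s') := by
  obtain ⟨ε, hε, γ, hγ, hcount⟩ :=
    exists_mul_card_piFinset_le_card_partiteHoms (Nat.card α) hδ₀ hδ₁
  obtain ⟨B, hB, hshadow⟩ := exists_isShadowBlowup (Nat.card α) hγ
  refine ⟨ε, hε, B, hB, fun Γ _ H U t hdense hU => ?_⟩
  let e := Finite.equivFin α
  obtain ⟨X, hX⟩ := hshadow t (U ∘ e.symm) (partiteHoms Γ (H.comap e.symm) (U ∘ e.symm))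
    (partiteHoms_subset _ _) (hcount Γ _ _ fun i j hij => hdense _ _ hij) fun i => hU _
  refine ⟨fun a s => X s (e a), fun a => hX.injective (e a), fun a s => ?_, fun a b hab s s' => ?_⟩
  · simpa using (mem_partiteHoms.1 (hX.mem s)).1 (e a)
  · obtain ⟨x, hx, hxa, hxb⟩ := hX.exists_mem (e.injective.ne hab.ne) s s'
    have hadj := (mem_partiteHoms.1 hx).2 (e a) (e b) (by simpa using hab)
    rwa [hxa, hxb] at hadj

section Potential

lemma card_mul_edgeDensity_eq_sum {W : Type*} (G : SimpleGraph W) [DecidableRel G.Adj]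
    (s t : Finset W) : #s * (G.edgeDensity s t : ℝ) = ∑ v ∈ s, (#{w ∈ t | G.Adj v w} : ℝ) / #t := by
  rw [← sum_div, ← Nat.cast_sum, ← card_interedges_eq_sum_degree, SimpleGraph.edgeDensity_def]
  rcases s.eq_empty_or_nonempty with rfl | hs
  · simp
  · have hs0 : (#s : ℝ) ≠ 0 := Nat.cast_ne_zero.2 (card_ne_zero.2 hs)
    push_cast
    field_simp

lemma cast_card_eq_add_sdiff {W : Type*} [DecidableEq W] {s X : Finset W} (hX : X ⊆ s) :
    (#s : ℝ) = #X + #(s \ X) := by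
  rw [← card_sdiff_add_card_eq_card hX]
  push_cast
  ring

lemma card_mul_sq_edgeDensity_add_le {W : Type*} [DecidableEq W] (G : SimpleGraph W)
    [DecidableRel G.Adj] {s X : Finset W} (hX : X ⊆ s) (t : Finset W) :
    #s * (G.edgeDensity s t : ℝ) ^ 2 + #X * (G.edgeDensity X t - G.edgeDensity s t : ℝ) ^ 2 ≤
      #X * (G.edgeDensity X t : ℝ) ^ 2 + #(s \ X) * (G.edgeDensity (s \ X) t : ℝ) ^ 2 := by
  set A : ℝ := (G.edgeDensity s t : ℝ) with hA
  set a : ℝ := (G.edgeDensity X t : ℝ) with ha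
  set b : ℝ := (G.edgeDensity (s \ X) t : ℝ) with hb
  have hcard : (#s : ℝ) = #X + #(s \ X) := cast_card_eq_add_sdiff hX
  have hmean : #s * A = #X * a + #(s \ X) * b := by
    rw [hA, ha, hb, card_mul_edgeDensity_eq_sum, card_mul_edgeDensity_eq_sum,
      card_mul_edgeDensity_eq_sum, add_comm, sum_sdiff hX]
  have hgap : #X * a ^ 2 + #(s \ X) * b ^ 2 - (#s * A ^ 2 + #X * (a - A) ^ 2) =
      #(s \ X) * (b - A) ^ 2 := by
    rw [hcard] at hmean ⊢
    linear_combination (-2 * A) * hmean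
  linarith [mul_nonneg (Nat.cast_nonneg (α := ℝ) #(s \ X)) (sq_nonneg (b - A))]

lemma mul_log_add_le {x y : ℝ} (hx : 0 ≤ x) (hy : 0 ≤ y) :
    x * Real.log (x + y) ≤ x * Real.log x + y := by
  rcases hx.eq_or_lt with rfl | hx
  · simpa using hy
  have hlog : Real.log (x + y) - Real.log x ≤ y / x := by
    rw [← Real.log_div (by positivity) hx.ne']
    calc Real.log ((x + y) / x) ≤ (x + y) / x - 1 := Real.log_le_sub_one_of_pos (by positivity)
      _ = y / x := by
        field_simp
        ring
  rw [le_div_iff₀' hx] at hlog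
  linarith

variable {V W κ : Type*} [Fintype V] [Fintype κ] (Γ : κ → SimpleGraph W)
  [∀ c, DecidableRel (Γ c).Adj]

/-- The total mean square density of the graphs `Γ c` between the parts `U v`. -/
noncomputable def energy (U : V → Finset W) : ℝ :=
  ∑ p ∈ univ.offDiag, ∑ c, ((Γ c).edgeDensity (U p.1) (U p.2) : ℝ) ^ 2

/-- The energy together with a reward, weighted by `l`, for keeping the parts `U v` large. -/
noncomputable def potential (l : ℝ) (U : V → Finset W) : ℝ :=
  energy Γ U + l * ∑ v, Real.log #(U v)

lemma energy_nonneg (U : V → Finset W) : 0 ≤ energy Γ U :=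
  sum_nonneg fun _ _ => sum_nonneg fun _ _ => sq_nonneg _

lemma energy_le (U : V → Finset W) : energy Γ U ≤ Fintype.card V ^ 2 * Fintype.card κ := by
  have hle (c : κ) (p : V × V) : ((Γ c).edgeDensity (U p.1) (U p.2) : ℝ) ^ 2 ≤ 1 :=
    pow_le_one₀ (mod_cast (Γ c).edgeDensity_nonneg _ _) (mod_cast (Γ c).edgeDensity_le_one _ _)
  calc energy Γ U ≤ ∑ p : V × V, ∑ c, ((Γ c).edgeDensity (U p.1) (U p.2) : ℝ) ^ 2 :=
        sum_le_sum_of_subset_of_nonneg (subset_univ _)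
          fun _ _ _ => sum_nonneg fun _ _ => sq_nonneg _
    _ ≤ ∑ _p : V × V, ∑ _c : κ, 1 := sum_le_sum fun p _ => sum_le_sum fun c _ => hle c p
    _ = Fintype.card V ^ 2 * Fintype.card κ := by
        simp only [sum_const, card_univ, Fintype.card_prod, nsmul_eq_mul, mul_one]
        push_cast
        ring

end Potential

section Splitting

variable {V W κ : Type*} [DecidableEq V] [DecidableEq W] {U : V → Finset W} {v w : V} {X : Finset W}

lemma card_mul_sq_edgeDensity_le (G : SimpleGraph W) [DecidableRel G.Adj] (hX : X ⊆ U v) {p : V × V}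
    (hp : p.1 ≠ p.2) :
    #(U v) * (G.edgeDensity (U p.1) (U p.2) : ℝ) ^ 2 ≤
      #X * (G.edgeDensity (Function.update U v X p.1) (Function.update U v X p.2) : ℝ) ^ 2 +
        #(U v \ X) * (G.edgeDensity (Function.update U v (U v \ X) p.1)
          (Function.update U v (U v \ X) p.2) : ℝ) ^ 2 := by
  have hsplit (t : Finset W) := (le_add_of_nonneg_right (by positivity)).trans
    (card_mul_sq_edgeDensity_add_le G hX t)
  obtain ⟨a, b⟩ := p
  rcases eq_or_ne a v with rfl | ha
  · simpa only [Function.update_self, Function.update_of_ne hp.symm] using hsplit (U b)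
  rcases eq_or_ne b v with rfl | hb
  · simpa only [Function.update_self, Function.update_of_ne ha, G.edgeDensity_comm (U a)]
      using hsplit (U a)
  · simp only [Function.update_of_ne ha, Function.update_of_ne hb]
    rw [cast_card_eq_add_sdiff hX, add_mul]

variable [Fintype V]

lemma card_mul_sum_log_card_sub_le (hX : X ⊆ U v) :
    #(U v) * (∑ u, Real.log #(U u) - 1) ≤
      #X * ∑ u, Real.log #(Function.update U v X u) +
        #(U v \ X) * ∑ u, Real.log #(Function.update U v (U v \ X) u) := by
  have hcard : (#(U v) : ℝ) = #X + #(U v \ X) := cast_card_eq_add_sdiff hX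
  have hsum (Y : Finset W) : ∑ u, Real.log #(Function.update U v Y u) =
      Real.log #Y + ∑ u ∈ univ.erase v, Real.log #(U u) := by
    rw [← add_sum_erase _ _ (mem_univ v), Function.update_self]
    congr 1
    exact sum_congr rfl fun u hu => by rw [Function.update_of_ne (ne_of_mem_erase hu)]
  have hU := hsum (U v)
  rw [Function.update_eq_self] at hU
  rw [hsum, hsum, hU, hcard]
  have hlog₁ := mul_log_add_le (Nat.cast_nonneg (α := ℝ) #X) (Nat.cast_nonneg #(U v \ X))
  have hlog₂ := mul_log_add_le (Nat.cast_nonneg (α := ℝ) #(U v \ X)) (Nat.cast_nonneg #X)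
  rw [add_comm (#(U v \ X) : ℝ)] at hlog₂
  linarith

variable [Fintype κ] {Γ : κ → SimpleGraph W} [∀ c, DecidableRel (Γ c).Adj]

lemma card_mul_energy_add_le (hX : X ⊆ U v) (hvw : v ≠ w) (c : κ) :
    #(U v) * energy Γ U +
        #X * ((Γ c).edgeDensity X (U w) - (Γ c).edgeDensity (U v) (U w) : ℝ) ^ 2 ≤
      #X * energy Γ (Function.update U v X) +
        #(U v \ X) * energy Γ (Function.update U v (U v \ X)) := by
  let q (U : V → Finset W) (p : V × V) (c : κ) : ℝ := ((Γ c).edgeDensity (U p.1) (U p.2) : ℝ) ^ 2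
  let gap (p : V × V) (c : κ) : ℝ := #X * q (Function.update U v X) p c +
    #(U v \ X) * q (Function.update U v (U v \ X)) p c - #(U v) * q U p c
  have hgap : ∀ p ∈ univ.offDiag, ∀ c ∈ univ, 0 ≤ gap p c := fun p hp c _ =>
    sub_nonneg.2 (card_mul_sq_edgeDensity_le (Γ c) hX (mem_offDiag.1 hp).2.2)
  have hgain : #X * ((Γ c).edgeDensity X (U w) - (Γ c).edgeDensity (U v) (U w) : ℝ) ^ 2 ≤
      gap (v, w) c := by
    have := card_mul_sq_edgeDensity_add_le (Γ c) hX (U w)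
    simp only [gap, q, Function.update_self, Function.update_of_ne hvw.symm]
    linarith
  have hvw' : (v, w) ∈ univ.offDiag := mem_offDiag.2 ⟨mem_univ _, mem_univ _, hvw⟩
  have hsum : gap (v, w) c ≤ ∑ p ∈ univ.offDiag, ∑ c, gap p c :=
    (single_le_sum (hgap _ hvw') (mem_univ c)).trans
      (single_le_sum (f := fun p => ∑ c, gap p c) (fun p hp => sum_nonneg (hgap p hp)) hvw')
  simp only [gap, sum_sub_distrib, sum_add_distrib, ← mul_sum] at hsum
  change _ ≤ #X * energy Γ _ + #(U v \ X) * energy Γ _ - #(U v) * energy Γ U at hsum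
  linarith

-- The weights are not divided by `#(U v)`, so that `X = U v` and `X = ∅` are not special cases.
lemma card_mul_potential_sub_add_le {l : ℝ} (hl : 0 ≤ l) (hX : X ⊆ U v) (hvw : v ≠ w) (c : κ) :
    #(U v) * (potential Γ l U - l) +
        #X * ((Γ c).edgeDensity X (U w) - (Γ c).edgeDensity (U v) (U w) : ℝ) ^ 2 ≤
      #X * potential Γ l (Function.update U v X) +
        #(U v \ X) * potential Γ l (Function.update U v (U v \ X)) := by
  have henergy := card_mul_energy_add_le (Γ := Γ) hX hvw c
  have hlog := mul_le_mul_of_nonneg_left (card_mul_sum_log_card_sub_le hX) hl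
  unfold potential
  linarith

end Splitting
section Regularity

variable {V W κ : Type*} [Fintype V] [DecidableEq V] [Fintype κ]

/-- The subcylinders of the cylinder `P`: all ways to choose a nonempty part `U v` inside each
`P v`. -/
def subcylinders [DecidableEq W] (P : V → Finset W) : Finset (V → Finset W) :=
  Fintype.piFinset fun v => (P v).powerset.erase ∅

lemma mem_subcylinders [DecidableEq W] {P U : V → Finset W} :
    U ∈ subcylinders P ↔ ∀ v, (U v).Nonempty ∧ U v ⊆ P v := by
  simp [subcylinders, nonempty_iff_ne_empty]

lemma update_mem_subcylinders [DecidableEq W] {P U : V → Finset W} {v : V} {X : Finset W}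
    (hU : U ∈ subcylinders P) (hX : X.Nonempty) (hXU : X ⊆ U v) :
    Function.update U v X ∈ subcylinders P := by
  rw [mem_subcylinders] at hU ⊢
  intro u
  rcases eq_or_ne u v with rfl | hu
  · simpa only [Function.update_self] using ⟨hX, hXU.trans (hU u).2⟩
  · simpa only [Function.update_of_ne hu] using hU u

variable {Γ : κ → SimpleGraph W} [∀ c, DecidableRel (Γ c).Adj] {ε l m : ℝ} {P U : V → Finset W}
  {v w : V}

lemma nonempty_of_mul_le_card {s t : Finset W} (hε : 0 < ε) (hs : s.Nonempty)
    (hst : #s * ε ≤ #t) : t.Nonempty :=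
  card_pos.1 (Nat.cast_pos.1 ((mul_pos (Nat.cast_pos.2 (card_pos.2 hs)) hε).trans_le hst))

lemma potential_deficit_le [DecidableEq W] (hm : ∀ U ∈ subcylinders P, potential Γ l U ≤ m)
    (hl : 0 ≤ l) (hε : 0 < ε) (hU : U ∈ subcylinders P) (hvw : v ≠ w) (c : κ) {X : Finset W}
    (hX : X ⊆ U v) (hXε : #(U v) * ε ≤ #X) :
    m - potential Γ l (Function.update U v X) +
        ((Γ c).edgeDensity X (U w) - (Γ c).edgeDensity (U v) (U w) : ℝ) ^ 2 ≤
      (l + (m - potential Γ l U)) / ε := by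
  have hUv : (0 : ℝ) < #(U v) := Nat.cast_pos.2 (card_pos.2 (mem_subcylinders.1 hU v).1)
  have hX0 : X.Nonempty := nonempty_of_mul_le_card hε (mem_subcylinders.1 hU v).1 hXε
  have hmX := hm _ (update_mem_subcylinders hU hX0 hX)
  have hrest : #(U v \ X) * potential Γ l (Function.update U v (U v \ X)) ≤ #(U v \ X) * m := by
    rcases (U v \ X).eq_empty_or_nonempty with h | h
    · simp [h]
    · exact mul_le_mul_of_nonneg_left (hm _ (update_mem_subcylinders hU h sdiff_subset))
        (Nat.cast_nonneg _)
  have hsplit := card_mul_potential_sub_add_le (Γ := Γ) hl hX hvw c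
  set d := m - potential Γ l (Function.update U v X) +
    ((Γ c).edgeDensity X (U w) - (Γ c).edgeDensity (U v) (U w) : ℝ) ^ 2 with hd
  have hd0 : 0 ≤ d := add_nonneg (sub_nonneg.2 hmX) (sq_nonneg _)
  have hXd : #X * d ≤ #(U v) * (l + (m - potential Γ l U)) := by
    have hcard : (#(U v) : ℝ) * m = #X * m + #(U v \ X) * m := by
      rw [cast_card_eq_add_sdiff hX, add_mul]
    rw [hd]
    linarith
  rw [le_div_iff₀' hε]
  refine le_of_mul_le_mul_left ?_ hUv
  calc #(U v) * (ε * d) = #(U v) * ε * d := by ring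
    _ ≤ #X * d := mul_le_mul_of_nonneg_right hXε hd0
    _ ≤ _ := hXd

lemma isUniform_of_isMax_potential [DecidableEq W] (hl : 0 ≤ l) (hε : 0 < ε)
    (hlε : 4 * (1 + ε) * l ≤ ε ^ 4) (hU : U ∈ subcylinders P)
    (hmax : ∀ U' ∈ subcylinders P, potential Γ l U' ≤ potential Γ l U) (c : κ) (hvw : v ≠ w) :
    (Γ c).IsUniform ε (U v) (U w) := by
  intro X hX Y hY hXε hYε
  have hX0 : X.Nonempty := nonempty_of_mul_le_card hε (mem_subcylinders.1 hU v).1 hXε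
  have hY0 : Y.Nonempty := nonempty_of_mul_le_card hε (mem_subcylinders.1 hU w).1 hYε
  -- Pass from `U v` to `X` and then from `U w` to `Y`: as `U` maximizes the potential, neither
  -- step can change the density by much.
  let U₁ := Function.update U v X
  have hU₁ : U₁ ∈ subcylinders P := update_mem_subcylinders hU hX0 hX
  have hU₁v : U₁ v = X := Function.update_self ..
  have hU₁w : U₁ w = U w := Function.update_of_ne hvw.symm ..
  have hleft := potential_deficit_le hmax hl hε hU hvw c hX hXε
  have hright := potential_deficit_le hmax hl hε hU₁ hvw.symm c (hU₁w ▸ hY) (hU₁w ▸ hYε)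
  have hU₁max := hmax _ hU₁
  have hlast := hmax _ (update_mem_subcylinders hU₁ hY0 (hU₁w ▸ hY))
  rw [hU₁v, hU₁w, (Γ c).edgeDensity_comm Y, (Γ c).edgeDensity_comm (U w)] at hright
  rw [sub_self, add_zero, le_div_iff₀' hε] at hleft
  rw [le_div_iff₀' hε] at hright
  have hgapX : |((Γ c).edgeDensity X (U w) - (Γ c).edgeDensity (U v) (U w) : ℝ)| < ε / 2 := by
    refine abs_lt_of_sq_lt_sq (lt_of_mul_lt_mul_left ?_ hε.le) (by positivity)
    have hl_lt : l < ε * (ε / 2) ^ 2 := by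
      have : 0 < ε ^ 3 := by positivity
      nlinarith
    nlinarith
  have hgapY : |((Γ c).edgeDensity X Y - (Γ c).edgeDensity X (U w) : ℝ)| ≤ ε / 2 := by
    refine abs_le_of_sq_le_sq (le_of_mul_le_mul_left ?_ (pow_pos hε 2)) (by positivity)
    nlinarith
  calc |((Γ c).edgeDensity X Y - (Γ c).edgeDensity (U v) (U w) : ℝ)| ≤ _ := abs_sub_le ..
    _ < ε / 2 + ε / 2 := add_lt_add_of_le_of_lt hgapY hgapX
    _ = ε := add_halves ε

lemma card_le_exp_mul_card [DecidableEq W] (hl : 0 < l) (hU : U ∈ subcylinders P)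
    (hPU : potential Γ l P ≤ potential Γ l U) (v : V) :
    (#(P v) : ℝ) ≤ Real.exp (Fintype.card V ^ 2 * Fintype.card κ / l) * #(U v) := by
  have hUpos (u : V) : (0 : ℝ) < #(U u) :=
    Nat.cast_pos.2 (card_pos.2 (mem_subcylinders.1 hU u).1)
  have hle (u : V) : (#(U u) : ℝ) ≤ #(P u) :=
    Nat.cast_le.2 (card_le_card (mem_subcylinders.1 hU u).2)
  have hlog : Real.log #(P v) - Real.log #(U v) ≤ ∑ u, (Real.log #(P u) - Real.log #(U u)) :=
    single_le_sum (f := fun u => Real.log #(P u) - Real.log #(U u))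
      (fun u _ => sub_nonneg.2 (Real.log_le_log (hUpos u) (hle u))) (mem_univ v)
  have henergy : l * ∑ u, (Real.log #(P u) - Real.log #(U u)) ≤
      Fintype.card V ^ 2 * Fintype.card κ := by
    rw [sum_sub_distrib]
    unfold potential at hPU
    linarith [energy_nonneg Γ P, energy_le Γ U]
  have hPpos : (0 : ℝ) < #(P v) := (hUpos v).trans_le (hle v)
  rw [← div_le_iff₀ (hUpos v), ← Real.log_le_iff_le_exp (div_pos hPpos (hUpos v)),
    Real.log_div hPpos.ne' (hUpos v).ne', le_div_iff₀' hl]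
  exact (mul_le_mul_of_nonneg_left hlog hl.le).trans henergy

theorem exists_isUniform_subcylinder (V κ : Type*) [Finite V] [Finite κ] {ε : ℝ} (hε : 0 < ε) :
    ∃ a : ℕ, 0 < a ∧ ∀ {W : Type*} (Γ : κ → SimpleGraph W) [∀ c, DecidableRel (Γ c).Adj]
      (P : V → Finset W), (∀ v, (P v).Nonempty) → ∃ U : V → Finset W, (∀ v, U v ⊆ P v) ∧
        (∀ v, #(P v) ≤ a * #(U v)) ∧ ∀ c, Pairwise fun v w => (Γ c).IsUniform ε (U v) (U w) := by
  classical
  have := Fintype.ofFinite V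
  have := Fintype.ofFinite κ
  let l : ℝ := ε ^ 4 / (4 * (1 + ε))
  have hl : 0 < l := by positivity
  let N : ℝ := Fintype.card V ^ 2 * Fintype.card κ
  refine ⟨⌈Real.exp (N / l)⌉₊, Nat.ceil_pos.2 (Real.exp_pos _), fun {W} Γ _ P hP => ?_⟩
  have hPmem : P ∈ subcylinders P := mem_subcylinders.2 fun v => ⟨hP v, Subset.rfl⟩
  obtain ⟨U, hU, hmax⟩ := exists_max_image (subcylinders P) (potential Γ l) ⟨P, hPmem⟩
  refine ⟨U, fun v => (mem_subcylinders.1 hU v).2, fun v => ?_, fun c v w hvw =>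
    isUniform_of_isMax_potential hl.le hε ?_ hU hmax c hvw⟩
  · rw [← Nat.cast_le (α := ℝ), Nat.cast_mul]
    exact (card_le_exp_mul_card hl hU (hmax P hPmem) v).trans
      (mul_le_mul_of_nonneg_right (Nat.le_ceil _) (Nat.cast_nonneg _))
  · exact (mul_div_cancel₀ _ (by positivity)).le

end Regularity

section Colorings

variable {V W κ : Type*}

/-- The graph of the pairs to which the coloring `C` assigns the color `c`. -/
def colorGraph (C : Sym2 W → κ) (c : κ) : SimpleGraph W :=
  SimpleGraph.fromEdgeSet (C ⁻¹' {c})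

lemma colorGraph_adj {C : Sym2 W → κ} {c : κ} {x y : W} :
    (colorGraph C c).Adj x y ↔ C s(x, y) = c ∧ x ≠ y := by
  simp [colorGraph]

open scoped Classical in
lemma exists_inv_card_le_edgeDensity_colorGraph [Fintype κ] (C : Sym2 W → κ) {s t : Finset W}
    (hs : s.Nonempty) (ht : t.Nonempty) (hst : Disjoint s t) :
    ∃ c, (Fintype.card κ : ℝ)⁻¹ ≤ (colorGraph C c).edgeDensity s t := by
  have : Nonempty κ := hs.to_type.map fun x => C s(x, x)
  have hκ : (0 : ℝ) < Fintype.card κ := Nat.cast_pos.2 Fintype.card_pos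
  obtain ⟨c, -, hc⟩ := exists_le_card_fiber_of_nsmul_le_card_of_maps_to (s := s ×ˢ t)
    (f := fun p => C s(p.1, p.2)) (b := (Fintype.card κ : ℝ)⁻¹ * (#s * #t))
    (fun _ _ => mem_univ _) univ_nonempty (by
      rw [card_univ, nsmul_eq_mul, mul_inv_cancel_left₀ hκ.ne', card_product, Nat.cast_mul])
  have hinter : {p ∈ s ×ˢ t | C s(p.1, p.2) = c} = (colorGraph C c).interedges s t :=
    filter_congr fun p hp => by
      obtain ⟨hp₁, hp₂⟩ := mem_product.1 hp
      rw [colorGraph_adj, and_iff_left (hst.forall_ne_finset hp₁ hp₂)]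
  refine ⟨c, ?_⟩
  rw [SimpleGraph.edgeDensity_def, ← hinter]
  push_cast
  rwa [le_div_iff₀ (mul_pos (Nat.cast_pos.2 hs.card_pos) (Nat.cast_pos.2 ht.card_pos))]

open scoped Classical in
lemma exists_majority_coloring [Fintype κ] (C : Sym2 W → κ) {U : V → Finset W}
    (hU : ∀ v, (U v).Nonempty) (hdisj : Pairwise fun v w => Disjoint (U v) (U w)) :
    ∃ C₀ : Sym2 V → κ, ∀ v w, v ≠ w →
      (Fintype.card κ : ℝ)⁻¹ ≤ (colorGraph C (C₀ s(v, w))).edgeDensity (U v) (U w) := by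
  have hpair (e : Sym2 V) : ∃ c, ∀ v w, e = s(v, w) → v ≠ w →
      (Fintype.card κ : ℝ)⁻¹ ≤ (colorGraph C c).edgeDensity (U v) (U w) := by
    induction e using Sym2.ind with | _ x y
    rcases eq_or_ne x y with rfl | hxy
    · obtain ⟨z, -⟩ := hU x
      refine ⟨C s(z, z), fun v w hvw hne => absurd ?_ hne⟩
      aesop
    obtain ⟨c, hc⟩ := exists_inv_card_le_edgeDensity_colorGraph C (hU x) (hU y) (hdisj hxy)
    refine ⟨c, fun v w hvw _ => ?_⟩
    rcases Sym2.eq_iff.1 hvw with ⟨rfl, rfl⟩ | ⟨rfl, rfl⟩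
    · exact hc
    · rwa [SimpleGraph.edgeDensity_comm]
  choose C₀ hC₀ using hpair
  exact ⟨C₀, fun v w hvw => hC₀ _ v w rfl hvw⟩

open scoped Classical in
theorem exists_biDense_reduced_coloring (V κ : Type*) [Finite V] [Fintype κ] [Nonempty κ] {ε : ℝ}
    (hε : 0 < ε) :
    ∃ a : ℕ, 0 < a ∧ ∀ {β : Type*} [Fintype β] [Nonempty β] (C : Sym2 (V × β) → κ),
      ∃ (U : V → Finset (V × β)) (C₀ : Sym2 V → κ), (∀ v, ∀ x ∈ U v, x.1 = v) ∧
        (∀ v, Fintype.card β ≤ a * #(U v)) ∧ ∀ v w, v ≠ w →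
          BiDense (colorGraph C (C₀ s(v, w))) ε ((Fintype.card κ : ℝ)⁻¹ / 2) (U v) (U w) := by
  have hκ : (0 : ℝ) < (Fintype.card κ : ℝ)⁻¹ / 2 := by
    have := Fintype.card_pos (α := κ)
    positivity
  obtain ⟨a, ha, hregular⟩ := exists_isUniform_subcylinder V κ (lt_min hε hκ)
  refine ⟨a, ha, fun {β} _ _ C => ?_⟩
  obtain ⟨U, hUP, hcard, hunif⟩ := hregular (colorGraph C) (fun v => {v} ×ˢ univ)
    fun v => (singleton_nonempty v).product univ_nonempty
  simp only [card_product, card_singleton, one_mul, card_univ] at hcard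
  have hfst (v : V) (x : V × β) (hx : x ∈ U v) : x.1 = v :=
    mem_singleton.1 (mem_product.1 (hUP v hx)).1
  have hU (v : V) : (U v).Nonempty :=
    card_pos.1 (Nat.pos_of_mul_pos_left (Fintype.card_pos.trans_le (hcard v)))
  obtain ⟨C₀, hC₀⟩ := exists_majority_coloring C hU fun v w hvw =>
    disjoint_left.2 fun x hv hw => hvw ((hfst v x hv).symm.trans (hfst w x hw))
  refine ⟨U, C₀, hfst, hcard, fun v w hvw => ?_⟩
  refine (BiDense.of_isUniform (hunif _ hvw) ?_).mono (min_le_left _ _)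
  linarith [hC₀ v w hvw, min_le_right ε ((Fintype.card κ : ℝ)⁻¹ / 2)]

end Colorings

lemma hasMonoCanonicalBlowup_of_colorGraph {V α : Type} {G : SimpleGraph V} {H : SimpleGraph α}
    {n t r : ℕ} {C : Sym2 (V × Fin n) → Fin r} {φ : α → V} {c : Fin r}
    {X : α → Fin t → V × Fin n} (hφ : Function.Injective φ)
    (hG : ∀ a b, H.Adj a b → G.Adj (φ a) (φ b)) (hX : ∀ a, Function.Injective (X a))
    (hXφ : ∀ a s, (X a s).1 = φ a)
    (hC : ∀ a b, H.Adj a b → ∀ s s', (colorGraph C c).Adj (X a s) (X b s')) :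
    HasMonoCanonicalBlowup G H n t r C := by
  have heta (a : α) (s : Fin t) : (φ a, (X a s).2) = X a s := Prod.ext (hXφ a s).symm rfl
  refine ⟨φ, fun a s => (X a s).2, c, hφ, fun a s s' h => hX a ?_, fun a b hab => ⟨hG a b hab, ?_⟩⟩
  · exact Prod.ext ((hXφ a s).trans (hXφ a s').symm) h
  · intro s s'
    rw [heta, heta]
    exact (colorGraph_adj.1 (hC a b hab s s')).1

end

/-- Theorem 1.2 in the paper. If `G →_r H` with `r ≥ 2`, then there are
constants `a = a(G,H,r) > 0` and `b = b(H,r) > 1`, where `b` does not depend on `G`, such that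
`B_r(G → H; t) ≤ a · b^t` for every positive integer `t`. -/
theorem blowup_ramsey_exponential_base_independent_of_G
    (α : Type) [Fintype α] (H : SimpleGraph α) (r : ℕ) (hr : 2 ≤ r) :
    ∃ b : ℝ, 1 < b ∧
      ∀ (V : Type) [Fintype V] (G : SimpleGraph V), ArrowsFor G H r →
        ∃ a : ℝ, 0 < a ∧ ∀ t : ℕ, 1 ≤ t →
          ∃ n : ℕ, (n : ℝ) ≤ a * b ^ t ∧ BlowupArrow G H r n t := by
  classical
  have : NeZero r := ⟨by lia⟩
  have hr₀ : (0 : ℝ) < (r : ℝ)⁻¹ / 2 := by positivity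
  have hr₁ : (r : ℝ)⁻¹ / 2 ≤ 1 := by
    linarith [inv_le_one_of_one_le₀ (Nat.one_le_cast (α := ℝ).2 (one_le_two.trans hr))]
  obtain ⟨ε, hε, B, hB, hblowup⟩ := exists_blowup_of_biDense α hr₀ hr₁
  refine ⟨B, Nat.one_lt_cast.2 hB, fun V _ G hG => ?_⟩
  obtain ⟨a, ha, hreduced⟩ := exists_biDense_reduced_coloring V (Fin r) hε
  refine ⟨a, Nat.cast_pos.2 ha, fun t _ => ⟨a * B ^ t, by push_cast; rfl, fun C => ?_⟩⟩
  have : NeZero (a * B ^ t) := ⟨by positivity⟩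
  obtain ⟨U, C₀, hfst, hcard, hdense⟩ := hreduced C
  simp only [Fintype.card_fin] at hcard hdense
  obtain ⟨φ, c, hφ, hmono⟩ := hG C₀
  obtain ⟨X, hX, hXU, hadj⟩ := hblowup (colorGraph C c) H (U ∘ φ) t
    (fun u v huv => (hmono u v huv).2 ▸ hdense _ _ (hφ.ne huv.ne))
    fun v => Nat.le_of_mul_le_mul_left (hcard (φ v)) ha
  exact hasMonoCanonicalBlowup_of_colorGraph hφ (fun u v huv => (hmono u v huv).1) hX
    (fun v s => hfst _ _ (hXU v s)) hadj
end

section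
/- Let G and H be graphs, with H having at least one edge, and let r ≥ 2 be an integer such that G →_r H. For every γ > 0 sufficiently small with respect to r, there exists a constant a = a(G,H,r,γ) such that for every positive integer t, the blowup Ramsey number satisfies B_r(G → H; t) ≤ a · b^t with b = r^{(r+γ)^{|E(H)|−1}}, where |E(H)| is the number of edges of H. -/
/-!
Refine the parts of the blowup of `G` pair by pair until each pair is lower regular, with density
about `1 / r`, in one of the colours. Colouring the edges of `G` by these colours, `G →_r H` gives a
copy of `H` all of whose pairs of parts are lower regular in the same colour.

In the first edge of this copy, a sharp form of the Kővári–Sós–Turán theorem finds a `T` by `T`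
biclique with `T = log_r n` up to lower order terms. The other vertices of `H` are added one at a
time to a family of partial embeddings spanning a blowup: by pigeonhole over the subsets of the
family, adding a vertex with `d` embedded neighbours keeps a proportion of about `r ^ (-d)` of the
family. Only the first edge is free, so `t` is about `T / r ^ (|E(H)| - 1)`.

The sharp Kővári–Sós–Turán theorem embeds one vertex `v` of the biclique at a time, passing from
`X, Y` to `X \ {v}, N(v)` and following a potential that is affine in the number of edges. Removing
`v` costs a telescoping amount; where it could cost more, the pair is already so large and dense
that the classical double count finds the biclique.
-/

universe u

section

open Finset
open scoped Classical

variable {A : Type*} {B : Type*}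

/-- `R` contains a complete bipartite graph with `i` vertices in `X` and `j` vertices in `Y`. -/
def HasBiclique (R : A → B → Prop) (X : Finset A) (Y : Finset B) (i j : ℕ) : Prop :=
  ∃ S ⊆ X, ∃ T ⊆ Y, #S = i ∧ #T = j ∧ ∀ a ∈ S, ∀ b ∈ T, R a b

/-- The neighbours of `v` in `Y`, for the bipartite graph with adjacency relation `R`. -/
noncomputable def nbhd (R : A → B → Prop) (Y : Finset B) (v : A) : Finset B := {b ∈ Y | R v b}

/-- The number of edges between `X` and `Y`, real-valued since it is compared with densities. -/
noncomputable def edgeCount (R : A → B → Prop) (X : Finset A) (Y : Finset B) : ℝ :=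
  #(Rel.interedges R X Y)

variable {R : A → B → Prop} {X X' : Finset A} {Y Y' : Finset B} {i j : ℕ}

theorem mem_nbhd {v : A} {b : B} : b ∈ nbhd R Y v ↔ b ∈ Y ∧ R v b := mem_filter

theorem HasBiclique.of_flip (h : HasBiclique (flip R) Y X j i) : HasBiclique R X Y i j := by
  obtain ⟨T, hT, S, hS, hTj, hSi, hST⟩ := h
  exact ⟨S, hS, T, hT, hSi, hTj, fun a ha b hb => hST b hb a ha⟩

theorem HasBiclique.insert_left {v : A} (h : HasBiclique R X' Y' i j) (hv : v ∈ X) (hvX' : v ∉ X')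
    (hX : X' ⊆ X) (hY : Y' ⊆ nbhd R Y v) : HasBiclique R X Y (i + 1) j := by
  obtain ⟨S, hS, T, hT, hSi, hTj, hST⟩ := h
  refine ⟨insert v S, insert_subset hv (hS.trans hX), T,
    (hT.trans hY).trans (filter_subset _ _), ?_, hTj, forall_mem_insert .. |>.2 ⟨?_, hST⟩⟩
  · rw [card_insert_of_notMem fun hvS => hvX' (hS hvS), hSi]
  · exact fun b hb => (mem_nbhd.1 (hY (hT hb))).2

theorem HasBiclique.exists_embedding (h : HasBiclique R X Y i j) :
    ∃ (f : Fin i ↪ A) (g : Fin j ↪ B),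
      (∀ k, f k ∈ X) ∧ (∀ l, g l ∈ Y) ∧ ∀ k l, R (f k) (g l) := by
  obtain ⟨S, hS, T, hT, hSi, hTj, hST⟩ := h
  let eS := (S.equivFinOfCardEq hSi).symm
  let eT := (T.equivFinOfCardEq hTj).symm
  exact ⟨eS.toEmbedding.trans (.subtype _), eT.toEmbedding.trans (.subtype _),
    fun k => hS (eS k).2, fun l => hT (eT l).2, fun k l => hST _ (eS k).2 _ (eT l).2⟩

theorem nbhd_subset (v : A) : nbhd R Y v ⊆ Y := filter_subset _ _

theorem edgeCount_nonneg : 0 ≤ edgeCount R X Y := Nat.cast_nonneg _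

theorem edgeCount_le_card_mul_card : edgeCount R X Y ≤ #X * #Y := by
  rw [edgeCount]
  exact_mod_cast Rel.card_interedges_le_mul R X Y

theorem edgeCount_eq_sum_card_nbhd : edgeCount R X Y = ∑ v ∈ X, (#(nbhd R Y v) : ℝ) := by
  rw [edgeCount, Rel.interedges, card_filter, sum_product, Nat.cast_sum]
  simp only [nbhd, card_filter]

theorem edgeCount_flip : edgeCount (flip R) Y X = edgeCount R X Y := by
  have h := sum_card_bipartiteAbove_eq_sum_card_bipartiteBelow R (s := X) (t := Y)
  rw [edgeCount_eq_sum_card_nbhd, edgeCount_eq_sum_card_nbhd]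
  exact_mod_cast h.symm

theorem edgeCount_union_left (h : Disjoint X X') :
    edgeCount R (X ∪ X') Y = edgeCount R X Y + edgeCount R X' Y := by
  simp only [edgeCount_eq_sum_card_nbhd, sum_union h]

theorem edgeCount_union_right (h : Disjoint Y Y') :
    edgeCount R X (Y ∪ Y') = edgeCount R X Y + edgeCount R X Y' := by
  rw [← edgeCount_flip, edgeCount_union_left h, edgeCount_flip, edgeCount_flip]

theorem edgeCount_le_edgeCount_erase_add {v : A} (hv : v ∈ X) :
    edgeCount R X Y ≤ edgeCount R (X.erase v) Y + #Y := by
  rw [edgeCount_eq_sum_card_nbhd, ← sum_erase_add _ _ hv, ← edgeCount_eq_sum_card_nbhd]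
  gcongr
  exact nbhd_subset v

theorem sum_edgeCount_nbhd :
    ∑ v ∈ X, edgeCount R X (nbhd R Y v) = ∑ b ∈ Y, (#(nbhd (flip R) X b) : ℝ) ^ 2 := by
  calc ∑ v ∈ X, edgeCount R X (nbhd R Y v)
      = ∑ v ∈ X, ∑ b ∈ Y, if R v b then (#(nbhd (flip R) X b) : ℝ) else 0 :=
        sum_congr rfl fun v _ => by
          rw [← edgeCount_flip, edgeCount_eq_sum_card_nbhd, nbhd, sum_filter]
    _ = ∑ b ∈ Y, ∑ v ∈ X, if R v b then (#(nbhd (flip R) X b) : ℝ) else 0 := sum_comm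
    _ = ∑ b ∈ Y, (#(nbhd (flip R) X b) : ℝ) ^ 2 := sum_congr rfl fun b _ => by
      rw [← sum_filter, sum_const, nsmul_eq_mul, sq, nbhd, Function.flip_def]

/-! ### The Kővári–Sós–Turán theorem -/

theorem sum_choose_card_nbhd (j : ℕ) :
    ∑ v ∈ X, (#(nbhd R Y v)).choose j =
      ∑ T ∈ Y.powersetCard j, #{v ∈ X | ∀ b ∈ T, R v b} := by
  have h := sum_card_bipartiteAbove_eq_sum_card_bipartiteBelow (fun v T => ∀ b ∈ T, R v b)
    (s := X) (t := Y.powersetCard j)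
  refine .trans (sum_congr rfl fun v _ => ?_) h
  rw [← card_powersetCard, bipartiteAbove]
  congr 1
  ext T
  simp only [nbhd, mem_powersetCard, mem_filter, subset_iff]
  grind

theorem hasBiclique_of_mul_choose_lt_sum
    (h : i * (#Y).choose j < ∑ v ∈ X, (#(nbhd R Y v)).choose j) :
    HasBiclique R X Y (i + 1) j := by
  rw [sum_choose_card_nbhd] at h
  obtain ⟨T, hT, hiT⟩ : ∃ T ∈ Y.powersetCard j, i < #{v ∈ X | ∀ b ∈ T, R v b} := by
    by_contra! hle
    have := sum_le_card_nsmul _ _ _ hle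
    rw [card_powersetCard, smul_eq_mul] at this
    linarith
  obtain ⟨hTY, hTj⟩ := mem_powersetCard.1 hT
  obtain ⟨S, hS, hSi⟩ := exists_subset_card_eq (Nat.succ_le_of_lt hiT)
  exact ⟨S, hS.trans (filter_subset _ _), T, hTY, hSi, hTj, fun a ha => (mem_filter.1 (hS ha)).2⟩

theorem card_mul_pow_le_sum_pow {ι : Type*} {s : Finset ι} {f : ι → ℝ} {c : ℝ} (hc : 0 ≤ c)
    (hf : ∀ v ∈ s, 0 ≤ f v) (h : #s * c ≤ ∑ v ∈ s, f v) (j : ℕ) :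
    #s * c ^ j ≤ ∑ v ∈ s, f v ^ j := by
  obtain rfl | hs := s.eq_empty_or_nonempty
  · simp
  obtain _ | j := j
  · simp
  have : (0 : ℝ) < #s := by exact_mod_cast hs.card_pos
  calc #s * c ^ (j + 1) = (#s * c) ^ (j + 1) / #s ^ j := by field_simp; ring
    _ ≤ (∑ v ∈ s, f v) ^ (j + 1) / #s ^ j := by gcongr
    _ ≤ ∑ v ∈ s, f v ^ (j + 1) := pow_sum_div_card_le_sum_pow hf j

theorem pow_div_two_le_sub_pow {c : ℝ} {j : ℕ} (hj : 0 < j) (hc : 2 * (j : ℝ) ^ 2 ≤ c) :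
    c ^ j / 2 ≤ (c - j) ^ j := by
  have hj₁ : (1 : ℝ) ≤ j := by exact_mod_cast hj
  have hc₀ : 0 < c := by nlinarith
  have hjc : (j : ℝ) / c ≤ 1 := by rw [div_le_one hc₀]; nlinarith
  have bernoulli := one_add_mul_le_pow (a := -(j / c)) (by linarith) j
  have hjjc : (j : ℝ) * (j / c) ≤ 1 / 2 := by
    rw [← mul_div_assoc, div_le_iff₀ hc₀]; nlinarith
  calc c ^ j / 2 ≤ c ^ j * (1 + -(j / c)) ^ j := by
        rw [div_eq_mul_one_div]; gcongr; linarith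
    _ = (c - j) ^ j := by rw [← mul_pow]; congr 1; field_simp; ring

theorem sum_sub_pow_le_of_sum_choose_le {ι : Type*} {s : Finset ι} {d : ι → ℕ} {i j m : ℕ}
    (h : ∑ v ∈ s, (d v).choose j ≤ i * m.choose j) :
    ∑ v ∈ s, (d v - j) ^ j ≤ i * m ^ j := by
  calc ∑ v ∈ s, (d v - j) ^ j
      ≤ ∑ v ∈ s, j.factorial * (d v).choose j := by
        gcongr with v
        rw [← Nat.descFactorial_eq_factorial_mul_choose]
        refine .trans ?_ (Nat.pow_sub_le_descFactorial _ _)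
        gcongr
        omega
    _ ≤ j.factorial * (i * m.choose j) := by rw [← mul_sum]; gcongr
    _ = i * m.descFactorial j := by rw [Nat.descFactorial_eq_factorial_mul_choose]; ring
    _ ≤ i * m ^ j := by gcongr; exact Nat.descFactorial_le_pow _ _

theorem hasBiclique_of_kovari_sos_turan {P : ℝ} (hP : 0 < P) (hi : 0 < i) (hj : 0 < j)
    (he : P * (#X * #Y) ≤ edgeCount R X Y)
    (hY : 2 * (j : ℝ) ^ 2 ≤ P * #Y)
    (hX : 2 * (i : ℝ) ≤ #X * P ^ j) : HasBiclique R X Y i j := by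
  obtain ⟨i, rfl⟩ : ∃ k, i = k + 1 := Nat.exists_eq_succ_of_ne_zero hi.ne'
  by_contra hno
  have hchoose := not_lt.1 fun h => hno (hasBiclique_of_mul_choose_lt_sum h)
  have hupper : ∑ v ∈ X, ((#(nbhd R Y v) - j : ℕ) : ℝ) ^ j ≤ i * #Y ^ j := by
    exact_mod_cast sum_sub_pow_le_of_sum_choose_le hchoose
  have hj₁ : (1 : ℝ) ≤ j := by exact_mod_cast hj
  have hY₀ : (0 : ℝ) < #Y := pos_of_mul_pos_right (by nlinarith) hP.le
  have hmean : #X * (P * #Y - j) ≤ ∑ v ∈ X, ((#(nbhd R Y v) - j : ℕ) : ℝ) := by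
    calc #X * (P * #Y - j) ≤ ∑ v ∈ X, ((#(nbhd R Y v) : ℝ) - j) := by
          rw [sum_sub_distrib, ← edgeCount_eq_sum_card_nbhd, sum_const, nsmul_eq_mul]; linarith
      _ ≤ _ := by gcongr; rw [sub_le_iff_le_add]; exact_mod_cast le_tsub_add
  have hlower : (i + 1) * (#Y : ℝ) ^ j ≤ ∑ v ∈ X, ((#(nbhd R Y v) - j : ℕ) : ℝ) ^ j := by
    calc (i + 1) * (#Y : ℝ) ^ j ≤ #X * P ^ j / 2 * #Y ^ j := by
          gcongr; push_cast at hX; linarith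
      _ = #X * ((P * #Y) ^ j / 2) := by ring
      _ ≤ #X * (P * #Y - j) ^ j := by gcongr; exact pow_div_two_le_sub_pow hj hY
      _ ≤ _ := card_mul_pow_le_sum_pow (by nlinarith) (fun _ _ => Nat.cast_nonneg _) hmean j
  have : 0 < (#Y : ℝ) ^ j := by positivity
  linarith

theorem mul_card_le_card_filter_le_card_nbhd {η d : ℝ} (hX : X.Nonempty)
    (he : d * (#X * #Y) ≤ edgeCount R X Y) (hd : 0 ≤ d) (hη : η ≤ 1) :
    η * d * #Y ≤ #{b ∈ Y | (1 - η) * d * #X ≤ #(nbhd (flip R) X b)} := by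
  have hX₀ : (0 : ℝ) < #X := by exact_mod_cast hX.card_pos
  set τ := (1 - η) * d * #X
  have hτ₀ : 0 ≤ τ := mul_nonneg (mul_nonneg (by linarith) hd) hX₀.le
  have hdeg : edgeCount R X Y ≤ #X * #{b ∈ Y | τ ≤ #(nbhd (flip R) X b)} + τ * #Y := by
    rw [← edgeCount_flip, edgeCount_eq_sum_card_nbhd]
    calc ∑ b ∈ Y, (#(nbhd (flip R) X b) : ℝ)
        ≤ ∑ b ∈ Y, ((if τ ≤ #(nbhd (flip R) X b) then (#X : ℝ) else 0) + τ) :=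
          sum_le_sum fun b _ => by
            have : (#(nbhd (flip R) X b) : ℝ) ≤ #X := by
              exact_mod_cast card_le_card (nbhd_subset b)
            split_ifs <;> linarith
      _ = #X * #{b ∈ Y | τ ≤ #(nbhd (flip R) X b)} + τ * #Y := by
        rw [sum_add_distrib, ← sum_filter, sum_const, sum_const, nsmul_eq_mul, nsmul_eq_mul]
        ring
  refine le_of_mul_le_mul_right (a := (#X : ℝ)) ?_ hX₀
  linarith

theorem exists_hasBiclique_of_mul_le_edgeCount {η d : ℝ} (hX : X.Nonempty)
    (he : d * (#X * #Y) ≤ edgeCount R X Y) (hd : 0 ≤ d) (hη : η ≤ 1)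
    (hY : 2 ^ #X * (#X : ℝ) ≤ η * d * #Y) :
    ∃ i ≤ #X, (1 - η) * d * #X ≤ i ∧ HasBiclique R X Y i i := by
  have hrich := hY.trans (mul_card_le_card_filter_le_card_nbhd hX he hd hη)
  obtain ⟨S, hS, hfiber⟩ := exists_le_card_fiber_of_mul_le_card_of_maps_to
    (t := X.powerset) (f := nbhd (flip R) X) (n := #X)
    (fun b _ => mem_powerset.2 (nbhd_subset b)) ⟨∅, empty_mem_powerset X⟩
    (by rw [card_powerset]; exact_mod_cast hrich)
  rw [mem_powerset] at hS
  obtain ⟨T, hT, hTS⟩ := exists_subset_card_eq ((card_le_card hS).trans hfiber)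
  have hmem : ∀ b ∈ T, b ∈ Y ∧ nbhd (flip R) X b = S := fun b hb => by
    obtain ⟨hbY, hbS⟩ := mem_filter.1 (hT hb)
    exact ⟨(mem_filter.1 hbY).1, hbS⟩
  have hlarge : (1 - η) * d * #X ≤ #S := by
    obtain ⟨b, hb⟩ := card_pos.1 (hX.card_pos.trans_le hfiber)
    obtain ⟨hbY, rfl⟩ := mem_filter.1 hb
    exact (mem_filter.1 hbY).2
  refine ⟨#S, card_le_card hS, hlarge, S, hS, T, fun b hb => (hmem b hb).1, rfl, hTS,
    fun a ha b hb => ?_⟩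
  rw [← (hmem b hb).2] at ha
  exact (mem_nbhd.1 ha).2

/-! ### Bicliques of logarithmic size -/

section LogBiclique

/-- The tangent at density `p` of the convex function `d ↦ #X * #Y * d ^ q`, evaluated at the
density of `R` between `X` and `Y`. Unlike the function itself, it is affine in `edgeCount`, so
passing to the neighbourhood of an average vertex of `X` lowers `q` by one at no loss. -/
noncomputable def bicliquePotential (R : A → B → Prop) (X : Finset A) (Y : Finset B) (p : ℝ)
    (q : ℕ) : ℝ :=
  p ^ q * (q * (edgeCount R X Y / p) - (q - 1) * (#X * #Y))

variable {p s x y P : ℝ} {q c : ℕ}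

theorem bicliquePotential_flip (q : ℕ) :
    bicliquePotential (flip R) Y X p q = bicliquePotential R X Y p q := by
  rw [bicliquePotential, bicliquePotential, edgeCount_flip, mul_comm (#Y : ℝ)]

theorem bicliquePotential_le_mul_pow (hp : 0 < p) (hP : 0 ≤ P)
    (he : edgeCount R X Y = P * (#X * #Y)) : bicliquePotential R X Y p q ≤ #X * #Y * P ^ q := by
  have hP' : 0 ≤ P / p := by positivity
  have bernoulli := one_add_mul_sub_le_pow (show -1 ≤ P / p by linarith) q
  calc bicliquePotential R X Y p q = #X * #Y * p ^ q * (1 + q * (P / p - 1)) := by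
        rw [bicliquePotential, he]; ring
    _ ≤ #X * #Y * p ^ q * (P / p) ^ q := by gcongr
    _ = #X * #Y * P ^ q := by rw [mul_assoc, ← mul_pow, mul_div_cancel₀ _ hp.ne']

theorem card_mul_bicliquePotential_succ_le (hp : 0 < p) (q : ℕ) :
    #X * bicliquePotential R X Y p (q + 1) ≤ ∑ v ∈ X, bicliquePotential R X (nbhd R Y v) p q := by
  set d : B → ℝ := fun b => #(nbhd (flip R) X b)
  have hsum : ∑ b ∈ Y, d b = edgeCount R X Y := by
    rw [← edgeCount_eq_sum_card_nbhd, edgeCount_flip]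
  have hvar : 0 ≤ ∑ b ∈ Y, d b ^ 2 - 2 * p * #X * edgeCount R X Y + p ^ 2 * #X ^ 2 * #Y := by
    calc 0 ≤ ∑ b ∈ Y, (d b - p * #X) ^ 2 := sum_nonneg fun b _ => sq_nonneg _
      _ = ∑ b ∈ Y, (d b ^ 2 - 2 * p * #X * d b + p ^ 2 * #X ^ 2) :=
        sum_congr rfl fun b _ => by ring
      _ = _ := by
        rw [sum_add_distrib, sum_sub_distrib, ← mul_sum, hsum, sum_const, nsmul_eq_mul]; ring
  have hpot : ∑ v ∈ X, bicliquePotential R X (nbhd R Y v) p q =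
      p ^ q * (q * ((∑ b ∈ Y, d b ^ 2) / p) - (q - 1) * (#X * edgeCount R X Y)) := by
    simp only [bicliquePotential]
    rw [← mul_sum, sum_sub_distrib, ← mul_sum, ← mul_sum, ← mul_sum, ← sum_div,
      sum_edgeCount_nbhd, ← edgeCount_eq_sum_card_nbhd]
  rw [hpot, bicliquePotential, ← sub_nonneg]
  calc 0 ≤ p ^ q * (q / p) *
        (∑ b ∈ Y, d b ^ 2 - 2 * p * #X * edgeCount R X Y + p ^ 2 * #X ^ 2 * #Y) :=
        mul_nonneg (by positivity) hvar
    _ = _ := by push_cast; field_simp; ring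

theorem bicliquePotential_le_erase_add {v : A} (hv : v ∈ X) (hp : 0 < p) (hq : 0 < q) :
    bicliquePotential R X Y p q ≤ bicliquePotential R (X.erase v) Y p q + p ^ q * q * #Y / p := by
  have hq₁ : (1 : ℝ) ≤ q := by exact_mod_cast hq
  calc bicliquePotential R X Y p q
      ≤ p ^ q * (q * ((edgeCount R (X.erase v) Y + #Y) / p) - (q - 1) * (#(X.erase v) * #Y)) := by
        rw [bicliquePotential]
        gcongr
        · exact edgeCount_le_edgeCount_erase_add hv
        · exact erase_subset v X
    _ = bicliquePotential R (X.erase v) Y p q + p ^ q * q * #Y / p := by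
        rw [bicliquePotential]; ring

theorem bicliquePotential_le_of_card_le {K : ℝ} (hK : #Y ≤ K) (hp : 0 < p) (hq : 0 < q) :
    bicliquePotential R X Y p q ≤ p ^ q * q * (#X * K) / p := by
  have hq₁ : (1 : ℝ) ≤ q := by exact_mod_cast hq
  calc bicliquePotential R X Y p q ≤ p ^ q * (q * (#X * K / p) - 0) := by
        rw [bicliquePotential]
        gcongr
        · exact edgeCount_le_card_mul_card.trans (by gcongr)
        · exact mul_nonneg (by linarith) (by positivity)
    _ = _ := by ring

theorem exists_vertex_bicliquePotential_le {K : ℝ} (hX : X.Nonempty) (hp : 0 < p) (hq : 0 < q)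
    (hK : p ^ q * q * (#X * K) / p < bicliquePotential R X Y p (q + 1)) :
    ∃ v ∈ X, K ≤ #(nbhd R Y v) ∧ bicliquePotential R X Y p (q + 1) - p ^ q * q * #Y / p ≤
      bicliquePotential R (X.erase v) (nbhd R Y v) p q := by
  obtain ⟨v, hv, hle⟩ : ∃ v ∈ X,
      bicliquePotential R X Y p (q + 1) ≤ bicliquePotential R X (nbhd R Y v) p q := by
    refine exists_le_of_sum_le hX ?_
    rw [sum_const, nsmul_eq_mul]
    exact card_mul_bicliquePotential_succ_le hp q
  refine ⟨v, hv, ?_, ?_⟩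
  · by_contra! hlt
    exact (hK.trans_le hle).not_ge (bicliquePotential_le_of_card_le hlt.le hp hq)
  · have herase := bicliquePotential_le_erase_add (R := R) (Y := nbhd R Y v) hv hp hq
    have hmono : p ^ q * q * #(nbhd R Y v) / p ≤ p ^ q * q * #Y / p := by
      gcongr
      exact nbhd_subset v
    linarith

theorem pow_succ_le_eight_mul_pow_succ (hq : 0 < q) (hp : 0 < p) (h : q * p ≤ (q + 1) * P) :
    p ^ (q + 1) ≤ 8 * P ^ (q + 1) := by
  have hq₀ : (0 : ℝ) < q := by exact_mod_cast hq
  have hP : 0 < P := by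
    have : 0 < (q + 1) * P := (by positivity : 0 < q * p).trans_le h
    exact pos_of_mul_pos_right this (by positivity)
  have he : (1 + 1 / (q : ℝ)) ^ (q + 1) ≤ 8 := by
    calc (1 + 1 / (q : ℝ)) ^ (q + 1) ≤ Real.exp (1 / q) ^ (q + 1) := by
          gcongr
          rw [add_comm]
          exact Real.add_one_le_exp _
      _ = Real.exp (1 + 1 / q) := by rw [← Real.exp_nat_mul]; congr 1; push_cast; field_simp
      _ ≤ Real.exp (1 + 1) := by
        gcongr
        exact div_le_one_of_le₀ (by exact_mod_cast hq) hq₀.le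
      _ ≤ 8 := by
        rw [Real.exp_add]
        nlinarith [Real.exp_one_lt_d9, Real.exp_pos 1]
  calc p ^ (q + 1) ≤ ((1 + 1 / q) * P) ^ (q + 1) := by
        gcongr
        rw [one_add_div hq₀.ne', div_mul_eq_mul_div, le_div_iff₀ hq₀]
        linarith
    _ ≤ 8 * P ^ (q + 1) := by rw [mul_pow]; gcongr

theorem le_sq_of_one_le_tangent (hs : 0 < s) (hs₁ : s < 1) (hp : p = s ^ 4)
    (hthr : 32 * ((q : ℝ) + 1) ^ 6 * s ^ q ≤ p ^ 3) (hx : 0 ≤ x) (hy : 0 ≤ y) (hP : P ≤ 1)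
    (hxy : x * y * P ^ (q + 1) ≤ (q + 1) ^ 2)
    (hΨ : 1 ≤ p ^ (q + 1) * ((q + 1) * (P / p) - q) * (x * y)) : P ≤ s ^ 2 := by
  by_contra! hlt
  have hp₀ : 0 < p := hp ▸ by positivity
  have hp₁ : p < 1 := hp ▸ pow_lt_one₀ hs.le hs₁ (by norm_num)
  have : 0 < P := (by positivity : 0 < s ^ 2).trans hlt
  have hslope : ((q : ℝ) + 1) * (P / p) - q ≤ (q + 1) / p := by
    calc ((q : ℝ) + 1) * (P / p) - q ≤ (q + 1) * (1 / p) - 0 := by gcongr; positivity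
      _ = (q + 1) / p := by ring
  have hpow : p ^ (q + 1) ≤ s ^ q * P ^ (q + 1) := by
    calc p ^ (q + 1) = s ^ (q + (q + 2)) * (s ^ 2) ^ (q + 1) := by rw [hp]; ring
      _ ≤ s ^ q * P ^ (q + 1) := by
        gcongr ?_ * ?_ ^ _
        exact pow_le_pow_of_le_one hs.le hs₁.le (by omega)
  have hlower : p ≤ s ^ q * (q + 1) ^ 3 := by
    rw [← one_mul p, ← le_div_iff₀ hp₀]
    calc 1 ≤ p ^ (q + 1) * ((q + 1) * (P / p) - q) * (x * y) := hΨ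
      _ ≤ p ^ (q + 1) * ((q + 1) / p) * (x * y) := by gcongr
      _ ≤ s ^ q * P ^ (q + 1) * ((q + 1) / p) * (x * y) := by gcongr
      _ = s ^ q * ((q + 1) / p) * (x * y * P ^ (q + 1)) := by ring
      _ ≤ s ^ q * ((q + 1) / p) * (q + 1) ^ 2 := by gcongr
      _ = s ^ q * (q + 1) ^ 3 / p := by ring
  have hq₁ : (1 : ℝ) ≤ q + 1 := by linarith [Nat.cast_nonneg (α := ℝ) q]
  have : s ^ q * ((q : ℝ) + 1) ^ 3 ≤ s ^ q * (q + 1) ^ 6 := by gcongr; norm_num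
  have : p ^ 3 ≤ p := pow_le_of_le_one hp₀.le hp₁.le (by norm_num)
  linarith

theorem pow_succ_mul_le_of_mul_pow_lt (hs : 0 < s) (hs₁ : s < 1) (hp : p = s ^ 4) (hq : 0 < q)
    (hthr : 32 * ((q : ℝ) + 1) ^ 6 * s ^ q ≤ p ^ 3) (hij : i + j = q + 1) (hji : j ≤ i)
    (hij₁ : i ≤ j + 1) (hx : 0 ≤ x) (hy : 0 ≤ y) (hP : P ≤ 1)
    (hxP : x * P ^ j < 2 * i) (hyP : y * P ^ i < 2 * j)
    (hΨ : 1 ≤ p ^ (q + 1) * ((q + 1) * (P / p) - q) * (x * y)) :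
    2 * (q + 1) ^ 5 * (p ^ (q + 1) * x) ≤ p ^ 3 ∧ 2 * (q + 1) ^ 5 * (p ^ (q + 1) * y) ≤ p ^ 3 := by
  have hp₀ : 0 < p := hp ▸ by positivity
  have hqP : q * p ≤ (q + 1) * P := by
    by_contra! hlt
    have : ((q : ℝ) + 1) * (P / p) - q ≤ 0 := by
      rw [sub_nonpos, mul_div_assoc', div_le_iff₀ hp₀]
      exact hlt.le
    nlinarith [mul_nonneg (mul_nonneg (pow_nonneg hp₀.le (q + 1)) hx) hy]
  have hP₀ : 0 ≤ P := by
    have : 0 ≤ (q + 1) * P := (by positivity : 0 ≤ q * p).trans hqP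
    exact nonneg_of_mul_nonneg_right this (by positivity)
  have hij' : (i : ℝ) + j = q + 1 := by exact_mod_cast hij
  have hxy : x * y * P ^ (q + 1) ≤ (q + 1) ^ 2 := by
    calc x * y * P ^ (q + 1) = (x * P ^ j) * (y * P ^ i) := by rw [← hij]; ring
      _ ≤ (2 * i) * (2 * j) := by gcongr
      _ ≤ (q + 1) ^ 2 := by rw [← hij']; nlinarith [sq_nonneg ((i : ℝ) - j)]
  have hPs := le_sq_of_one_le_tangent hs hs₁ hp hthr hx hy hP hxy hΨ
  have hpP := pow_succ_le_eight_mul_pow_succ hq hp₀ hqP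
  have bound {z : ℝ} {k l : ℕ} (hz : 0 ≤ z) (hkl : k + l = q + 1) (hqk : q ≤ 2 * k)
      (hzP : z * P ^ l < 2 * k) : 2 * (q + 1) ^ 5 * (p ^ (q + 1) * z) ≤ p ^ 3 := by
    have hk : (k : ℝ) ≤ q + 1 := by exact_mod_cast (by omega : k ≤ q + 1)
    calc 2 * (q + 1) ^ 5 * (p ^ (q + 1) * z)
        ≤ 2 * (q + 1) ^ 5 * (8 * P ^ (q + 1) * z) := by gcongr
      _ = 16 * (q + 1) ^ 5 * (z * P ^ l * P ^ k) := by rw [← hkl]; ring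
      _ ≤ 16 * (q + 1) ^ 5 * (2 * (q + 1) * (s ^ 2) ^ k) := by
        gcongr _ * (?_ * ?_ ^ _)
        exact hzP.le.trans (by gcongr)
      _ = 32 * (q + 1) ^ 6 * s ^ (2 * k) := by ring
      _ ≤ 32 * (q + 1) ^ 6 * s ^ q := by
        gcongr _ * ?_
        exact pow_le_pow_of_le_one hs.le hs₁.le hqk
      _ ≤ p ^ 3 := hthr
  exact ⟨bound hx hij (by omega) hxP, bound hy (by omega) (by omega) hyP⟩

theorem half_mul_le_edgeCount (hp : 0 < p) (hq : 0 < q)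
    (hX : X.Nonempty) (hY : Y.Nonempty) (h : 0 < bicliquePotential R X Y p (q + 1)) :
    p / 2 * (#X * #Y) ≤ edgeCount R X Y := by
  have hq₁ : (1 : ℝ) ≤ q := by exact_mod_cast hq
  have hXY : (0 : ℝ) < #X * #Y := by exact_mod_cast Nat.mul_pos hX.card_pos hY.card_pos
  have h' := pos_of_mul_pos_right h (by positivity)
  push_cast at h'
  have : 0 < (q + 1) * edgeCount R X Y - q * p * (#X * #Y) := by
    calc 0 < ((q + 1) * (edgeCount R X Y / p) - (q + 1 - 1) * (#X * #Y)) * p :=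
        mul_pos h' hp
      _ = _ := by field_simp; ring
  have : (q + 1) * (p / 2 * (#X * #Y)) ≤ (q + 1) * edgeCount R X Y := by
    nlinarith [mul_pos hp hXY]
  exact le_of_mul_le_mul_left this (by positivity)

theorem nonempty_of_four_mul_sq_le (hp : 0 < p) (hi : 0 < i) (h : 4 * (i : ℝ) ^ 2 ≤ p * #X) :
    X.Nonempty := by
  have : 0 < p * #X := (by positivity : (0 : ℝ) < 4 * (i : ℝ) ^ 2).trans_le h
  exact card_pos.1 (by exact_mod_cast pos_of_mul_pos_right this hp.le)

theorem hasBiclique_or_mul_pow_lt (hi : 0 < i) (hj : 0 < j) (hP : 0 < P)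
    (he : edgeCount R X Y = P * (#X * #Y)) (hX : 2 * (i : ℝ) ^ 2 ≤ P * #X)
    (hY : 2 * (j : ℝ) ^ 2 ≤ P * #Y) :
    HasBiclique R X Y i j ∨ #X * P ^ j < 2 * i ∧ #Y * P ^ i < 2 * j := by
  rcases le_or_gt (2 * (i : ℝ)) (#X * P ^ j) with h | hxP
  · exact .inl (hasBiclique_of_kovari_sos_turan hP hi hj he.ge hY h)
  rcases le_or_gt (2 * (j : ℝ)) (#Y * P ^ i) with h | hyP
  · refine .inl (.of_flip (hasBiclique_of_kovari_sos_turan hP hj hi ?_ hX h))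
    rw [edgeCount_flip, he, mul_comm (#Y : ℝ)]
  · exact .inr ⟨hxP, hyP⟩

theorem bicliquePotential_le_add_sq (hp : 0 < p) (hP : 0 ≤ P)
    (he : edgeCount R X Y = P * (#X * #Y)) (hX : #X * P ^ j ≤ 2 * i) (hY : #Y * P ^ i ≤ 2 * j) :
    bicliquePotential R X Y p (i + j) ≤ (i + j) ^ 2 := by
  calc bicliquePotential R X Y p (i + j) ≤ #X * #Y * P ^ (i + j) :=
        bicliquePotential_le_mul_pow hp hP he
    _ = (#X * P ^ j) * (#Y * P ^ i) := by ring
    _ ≤ (2 * i) * (2 * j) := by gcongr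
    _ ≤ (i + j) ^ 2 := by nlinarith [sq_nonneg ((i : ℝ) - j)]

/-- Once `i + j > c`, one vertex of an `i` by `j` biclique at density `p = s ^ 4` can be embedded
with a loss of `bicliquePotential` that is summable over all steps. -/
def IsStepThreshold (s : ℝ) (c : ℕ) : Prop :=
  2 ≤ c ∧ ∀ q : ℕ, c ≤ q → 32 * ((q : ℝ) + 1) ^ 6 * s ^ q ≤ (s ^ 4) ^ 3

theorem exists_isStepThreshold (hs : 0 < s) (hs₁ : s < 1) : ∃ c, IsStepThreshold s c := by
  have hlim : Filter.Tendsto (fun q : ℕ => 32 * ((q + 1 : ℕ) : ℝ) ^ 6 * s ^ (q + 1))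
      Filter.atTop (nhds 0) := by
    have h := (tendsto_pow_const_mul_const_pow_of_lt_one 6 hs.le hs₁).const_mul 32
    simp only [mul_zero, ← mul_assoc] at h
    exact h.comp (Filter.tendsto_add_atTop_nat 1)
  have hev := hlim.eventually_le_const (show 0 < (s ^ 4) ^ 3 * s by positivity)
  obtain ⟨c, hc⟩ := Filter.eventually_atTop.1 (hev.and (Filter.eventually_ge_atTop 2))
  refine ⟨c, (hc c le_rfl).2, fun q hq => ?_⟩
  have := (hc q hq).1
  push_cast at this
  rw [pow_succ s q, ← mul_assoc] at this
  exact le_of_mul_le_mul_right this hs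

theorem threshold_le_and_pow_succ_mul_card_le (hs : 0 < s) (hs₁ : s < 1) (hp : p = s ^ 4)
    (hc : IsStepThreshold s c) (hij : i + j = q + 1) (hj : 0 < j) (hji : j ≤ i) (hij₁ : i ≤ j + 1)
    (hX : 4 * (i : ℝ) ^ 2 ≤ p * #X) (hY : 4 * (j : ℝ) ^ 2 ≤ p * #Y)
    (hΨ : c ^ 2 + 1 ≤ bicliquePotential R X Y p (q + 1)) (hno : ¬ HasBiclique R X Y i j) :
    c ≤ q ∧ 2 * (q + 1) ^ 5 * (p ^ (q + 1) * #X) ≤ p ^ 3 ∧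
      2 * (q + 1) ^ 5 * (p ^ (q + 1) * #Y) ≤ p ^ 3 := by
  have hp₀ : 0 < p := hp ▸ by positivity
  have hi : 0 < i := hj.trans_le hji
  have hq : 0 < q := by omega
  have hXne := nonempty_of_four_mul_sq_le hp₀ hi hX
  have hYne := nonempty_of_four_mul_sq_le hp₀ hj hY
  have hX₀ : (0 : ℝ) < #X := by exact_mod_cast hXne.card_pos
  have hY₀ : (0 : ℝ) < #Y := by exact_mod_cast hYne.card_pos
  obtain ⟨P, he⟩ : ∃ P, edgeCount R X Y = P * (#X * #Y) :=
    ⟨_, (div_mul_cancel₀ _ (by positivity)).symm⟩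
  have hpP : p / 2 ≤ P := by
    refine le_of_mul_le_mul_right (he ▸ half_mul_le_edgeCount hp₀ hq hXne hYne ?_)
      (by positivity : (0 : ℝ) < #X * #Y)
    exact (by positivity : (0 : ℝ) < c ^ 2 + 1).trans_le hΨ
  have hP₀ : 0 < P := (half_pos hp₀).trans_le hpP
  have hP₁ : P ≤ 1 := by
    refine le_of_mul_le_mul_right ?_ (by positivity : (0 : ℝ) < #X * #Y)
    rw [← he, one_mul]
    exact edgeCount_le_card_mul_card
  obtain ⟨hxP, hyP⟩ := (hasBiclique_or_mul_pow_lt hi hj hP₀ he (by nlinarith)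
    (by nlinarith)).resolve_left hno
  have hcq : c ≤ q := by
    by_contra! hlt
    have hqc : (i : ℝ) + j ≤ c := by exact_mod_cast hij.trans_le hlt
    have hΨc : bicliquePotential R X Y p (q + 1) ≤ c ^ 2 := by
      rw [← hij]
      exact (bicliquePotential_le_add_sq hp₀ hP₀.le he hxP.le hyP.le).trans (by gcongr)
    linarith
  have hΨ₁ : 1 ≤ p ^ (q + 1) * ((q + 1) * (P / p) - q) * (#X * #Y) := by
    calc 1 ≤ bicliquePotential R X Y p (q + 1) := by nlinarith
      _ = _ := by rw [bicliquePotential, he]; push_cast; ring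
  exact ⟨hcq, pow_succ_mul_le_of_mul_pow_lt hs hs₁ hp hq (hp ▸ hc.2 q hcq) hij hji hij₁
    hX₀.le hY₀.le hP₁ hxP hyP hΨ₁⟩

theorem edge_loss_le_one (hp : 0 < p) (hx₀ : 0 ≤ x) (hj : 2 * (j : ℝ) ≤ q + 1)
    (hx : 2 * (q + 1) ^ 5 * (p ^ (q + 1) * x) ≤ p ^ 3) :
    p ^ q * q * (x * (4 * (j : ℝ) ^ 2 / p)) / p ≤ 1 := by
  have hq₁ : (1 : ℝ) ≤ q + 1 := le_add_of_nonneg_left q.cast_nonneg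
  calc p ^ q * q * (x * (4 * (j : ℝ) ^ 2 / p)) / p
      = q * (2 * j) ^ 2 * (p ^ (q + 1) * x) / p ^ 3 := by field_simp; ring
    _ ≤ 2 * (q + 1) ^ 5 * (p ^ (q + 1) * x) / p ^ 3 := by
      gcongr ?_ * _ / _
      calc q * (2 * (j : ℝ)) ^ 2 ≤ ((q : ℝ) + 1) * (q + 1) ^ 2 := by gcongr; linarith
        _ = ((q : ℝ) + 1) ^ 3 := by ring
        _ ≤ ((q : ℝ) + 1) ^ 5 := pow_le_pow_right₀ hq₁ (by norm_num)
        _ ≤ 2 * ((q : ℝ) + 1) ^ 5 := le_mul_of_one_le_left (by positivity) one_le_two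
    _ ≤ 1 := div_le_one_of_le₀ hx (by positivity)

-- The bound telescopes, so the total loss over all steps stays bounded.
theorem vertex_loss_le (hp : 0 < p) (hp₁ : p ≤ 1) (hq : 0 < q)
    (hy : 2 * (q + 1) ^ 5 * (p ^ (q + 1) * y) ≤ p ^ 3) :
    p ^ q * q * y / p ≤ 1 / q - 1 / (q + 1) := by
  have hq₁ : (1 : ℝ) ≤ q := by exact_mod_cast hq
  calc p ^ q * q * y / p = q * (p ^ (q + 1) * y) / p ^ 2 := by field_simp; ring
    _ ≤ q * (p ^ 3 / (2 * (q + 1) ^ 5)) / p ^ 2 := by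
      gcongr
      rwa [le_div_iff₀' (by positivity)]
    _ = q * p / (2 * (q + 1) ^ 5) := by field_simp
    _ ≤ (q + 1) * 1 / (1 * (q + 1) ^ 5) := by gcongr <;> linarith
    _ = 1 / (q + 1) ^ 4 := by field_simp
    _ ≤ 1 / (q * (q + 1)) := by
      gcongr
      nlinarith [pow_nonneg (by linarith : (0 : ℝ) ≤ q) 3]
    _ = 1 / q - 1 / (q + 1) := by field_simp; ring

theorem exists_vertex_of_not_hasBiclique (hs : 0 < s) (hs₁ : s < 1) (hp : p = s ^ 4)
    (hc : IsStepThreshold s c) (hij : i + j = q + 1) (hj : 0 < j) (hji : j ≤ i) (hij₁ : i ≤ j + 1)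
    (hX : 4 * (i : ℝ) ^ 2 ≤ p * #X) (hY : 4 * (j : ℝ) ^ 2 ≤ p * #Y)
    (hΨ : c ^ 2 + 2 - 1 / ((q : ℝ) + 1) ≤ bicliquePotential R X Y p (q + 1))
    (hno : ¬ HasBiclique R X Y i j) :
    2 ≤ q ∧ ∃ v ∈ X, 4 * (j : ℝ) ^ 2 ≤ p * #(nbhd R Y v) ∧
      c ^ 2 + 2 - 1 / (q : ℝ) ≤ bicliquePotential R (X.erase v) (nbhd R Y v) p q := by
  have hp₀ : 0 < p := hp ▸ by positivity
  have hp₁ : p < 1 := hp ▸ pow_lt_one₀ hs.le hs₁ (by norm_num)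
  have hq : 0 < q := by omega
  have hjq : 2 * (j : ℝ) ≤ q + 1 := by exact_mod_cast (by omega : 2 * j ≤ q + 1)
  have hΨ₁ : (c : ℝ) ^ 2 + 1 ≤ bicliquePotential R X Y p (q + 1) := by
    have : 1 / ((q : ℝ) + 1) ≤ 1 := div_le_one_of_le₀ (by simp) (by positivity)
    linarith
  obtain ⟨hcq, hx, hy⟩ :=
    threshold_le_and_pow_succ_mul_card_le hs hs₁ hp hc hij hj hji hij₁ hX hY hΨ₁ hno
  have hX₀ := nonempty_of_four_mul_sq_le hp₀ (hj.trans_le hji) hX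
  have hlossX : p ^ q * q * (#X * (4 * (j : ℝ) ^ 2 / p)) / p <
      bicliquePotential R X Y p (q + 1) := by
    have hc₂ : (2 : ℝ) ≤ c := by exact_mod_cast hc.1
    have := edge_loss_le_one hp₀ (Nat.cast_nonneg #X) hjq hx
    nlinarith
  have hlossY := vertex_loss_le hp₀ hp₁.le hq hy
  obtain ⟨v, hv, hvK, hvΨ⟩ := exists_vertex_bicliquePotential_le hX₀ hp₀ (by omega) hlossX
  refine ⟨hc.1.trans hcq, v, hv, ?_, ?_⟩
  · rwa [div_le_iff₀' hp₀] at hvK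
  · linarith

theorem hasBiclique_of_le_bicliquePotential (hs : 0 < s) (hs₁ : s < 1) (hp : p = s ^ 4)
    (hc : IsStepThreshold s c) (q : ℕ) :
    ∀ {A B : Type u} {R : A → B → Prop} {X : Finset A} {Y : Finset B} {i j : ℕ},
      i + j = q → 0 < j → j ≤ i → i ≤ j + 1 → 4 * (i : ℝ) ^ 2 ≤ p * #X → 4 * (j : ℝ) ^ 2 ≤ p * #Y →
      c ^ 2 + 2 - 1 / (q : ℝ) ≤ bicliquePotential R X Y p q → HasBiclique R X Y i j := by
  induction q with
  | zero => omega
  | succ q ih =>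
    intro A B R X Y i j hij hj hji hij₁ hX hY hΨ
    by_contra hno
    push_cast at hΨ
    obtain ⟨hq, v, hv, hYv, hΨv⟩ := exists_vertex_of_not_hasBiclique hs hs₁ hp hc hij hj hji hij₁
      hX hY hΨ hno
    obtain ⟨i, rfl⟩ : ∃ k, i = k + 1 := Nat.exists_eq_succ_of_ne_zero (by omega)
    have hXv : 4 * (i : ℝ) ^ 2 ≤ p * #(X.erase v) := by
      have hp₁ : p < 1 := hp ▸ pow_lt_one₀ hs.le hs₁ (by norm_num)
      rw [cast_card_erase_of_mem hv]
      push_cast at hX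
      nlinarith [Nat.cast_nonneg (α := ℝ) i]
    refine hno (.insert_left ?_ hv (notMem_erase v X) (erase_subset v X) subset_rfl)
    obtain rfl | rfl : i = j ∨ j = i + 1 := by omega
    · exact ih (by omega) hj le_rfl (by omega) hXv hYv hΨv
    · rw [← bicliquePotential_flip] at hΨv
      exact .of_flip (ih (by omega) (by omega) (by omega) le_rfl hYv hXv hΨv)

theorem exists_forall_sq_mul_pow_le (hp : 0 ≤ p) (hp₁ : p < 1) :
    ∃ C : ℝ, 0 ≤ C ∧ ∀ t : ℕ, (t : ℝ) ^ 2 * p ^ t ≤ C := by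
  obtain ⟨C, hC⟩ := (tendsto_pow_const_mul_const_pow_of_lt_one 2 hp hp₁).bddAbove_range
  have hC' : ∀ t : ℕ, (t : ℝ) ^ 2 * p ^ t ≤ C := fun t => hC ⟨t, rfl⟩
  exact ⟨C, by simpa using hC' 0, hC'⟩

theorem exists_pow_four_eq (hp : 0 < p) (hp₁ : p < 1) : ∃ s, 0 < s ∧ s < 1 ∧ p = s ^ 4 := by
  refine ⟨p ^ (4⁻¹ : ℝ), by positivity, Real.rpow_lt_one hp.le hp₁ (by norm_num), ?_⟩
  exact_mod_cast (Real.rpow_inv_natCast_pow hp.le (n := 4) (by norm_num)).symm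

theorem mul_pow_le_bicliquePotential (hp : 0 < p) (he : p * (#X * #Y) ≤ edgeCount R X Y) (q : ℕ) :
    p ^ q * (#X * #Y) ≤ bicliquePotential R X Y p q := by
  rw [bicliquePotential]
  gcongr
  have : (#X * #Y : ℝ) ≤ edgeCount R X Y / p := by rwa [le_div_iff₀' hp]
  nlinarith [q.cast_nonneg (α := ℝ)]

theorem exists_forall_hasBiclique (hp : 0 < p) (hp₁ : p < 1) :
    ∃ a : ℝ, 0 < a ∧ ∀ t : ℕ, 0 < t → ∀ {A B : Type u} {R : A → B → Prop} {X : Finset A}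
      {Y : Finset B}, a * p⁻¹ ^ t ≤ #X → a * p⁻¹ ^ t ≤ #Y → p * (#X * #Y) ≤ edgeCount R X Y →
      HasBiclique R X Y t t := by
  obtain ⟨s, hs, hs₁, hps⟩ := exists_pow_four_eq hp hp₁
  obtain ⟨c, hc⟩ := exists_isStepThreshold hs hs₁
  obtain ⟨C, hC₀, hC⟩ := exists_forall_sq_mul_pow_le hp.le hp₁
  set a : ℝ := c ^ 2 + 2 + 4 * C / p with ha
  have ha₁ : c ^ 2 + 2 ≤ a := le_add_of_nonneg_right (by positivity)
  refine ⟨a, by positivity, fun t ht A B R X Y hX hY he => ?_⟩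
  have hlarge : ∀ N : ℕ, a * p⁻¹ ^ t ≤ N → a ≤ p ^ t * N ∧ 4 * (t : ℝ) ^ 2 ≤ p * N := by
    intro N hN
    have haN : a ≤ p ^ t * N := by
      rwa [inv_pow, ← div_eq_mul_inv, div_le_iff₀' (by positivity)] at hN
    refine ⟨haN, le_of_mul_le_mul_right (a := p ^ t) ?_ (by positivity)⟩
    calc 4 * (t : ℝ) ^ 2 * p ^ t = 4 * (t ^ 2 * p ^ t) := by ring
      _ ≤ 4 * C := by gcongr; exact hC t
      _ = p * (4 * C / p) := by field_simp
      _ ≤ p * (p ^ t * N) := by gcongr; exact (le_add_of_nonneg_left (by positivity)).trans haN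
      _ = p * N * p ^ t := by ring
  obtain ⟨haX, hX₄⟩ := hlarge _ hX
  obtain ⟨haY, hY₄⟩ := hlarge _ hY
  refine hasBiclique_of_le_bicliquePotential hs hs₁ hps hc (t + t) rfl ht le_rfl (by omega)
    hX₄ hY₄ ?_
  calc c ^ 2 + 2 - 1 / ((t + t : ℕ) : ℝ) ≤ a := (sub_le_self _ (by positivity)).trans ha₁
    _ ≤ a * a := le_mul_of_one_le_left (by positivity) (by nlinarith [sq_nonneg (c : ℝ)])
    _ ≤ p ^ t * #X * (p ^ t * #Y) := by gcongr
    _ = p ^ (t + t) * (#X * #Y) := by ring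
    _ ≤ _ := mul_pow_le_bicliquePotential hp he _

end LogBiclique

/-! ### Lower regular pairs -/

section Regularity

/-- Lower `(μ, δ)`-regularity: every pair of subsets with at least a `μ` proportion of each side
has density at least `δ`. -/
def IsLowerRegular (R : A → B → Prop) (μ δ : ℝ) (X : Finset A) (Y : Finset B) : Prop :=
  ∀ X' ⊆ X, ∀ Y' ⊆ Y, μ * #X ≤ #X' → μ * #Y ≤ #Y' → δ * (#X' * #Y') ≤ edgeCount R X' Y'

variable {μ δ ε θ ρ : ℝ}

theorem IsLowerRegular.flip (h : IsLowerRegular R μ δ X Y) :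
    IsLowerRegular (flip R) μ δ Y X := by
  intro Y' hY X' hX hY' hX'
  rw [edgeCount_flip, mul_comm (#Y' : ℝ)]
  exact h X' hX Y' hY hX' hY'

theorem IsLowerRegular.mono (h : IsLowerRegular R (μ * ρ) δ X Y) (hμ : 0 ≤ μ) (hX : X' ⊆ X)
    (hY : Y' ⊆ Y) (hXρ : ρ * #X ≤ #X') (hYρ : ρ * #Y ≤ #Y') : IsLowerRegular R μ δ X' Y' := by
  refine fun S hS T hT hS' hT' => h S (hS.trans hX) T (hT.trans hY) ?_ ?_
  · exact mul_assoc μ ρ _ ▸ (mul_le_mul_of_nonneg_left hXρ hμ).trans hS'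
  · exact mul_assoc μ ρ _ ▸ (mul_le_mul_of_nonneg_left hYρ hμ).trans hT'

theorem IsLowerRegular.card_atypical_le {Z : Finset B} (h : IsLowerRegular R μ δ X Y) (hμ : 0 < μ)
    (hX : X.Nonempty) (hZ : Z ⊆ Y) (hZμ : μ * #Y ≤ #Z) :
    (#{v ∈ X | #(nbhd R Z v) < δ * #Z} : ℝ) ≤ μ * #X := by
  set S : Finset A := {v ∈ X | #(nbhd R Z v) < δ * #Z}
  by_contra! hlt
  have hS₀ : S.Nonempty := by
    have : 0 < μ * #X := mul_pos hμ (by exact_mod_cast hX.card_pos)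
    exact card_pos.1 (by exact_mod_cast this.trans hlt)
  refine (h S (filter_subset _ _) Z hZ hlt.le hZμ).not_gt ?_
  calc edgeCount R S Z = ∑ v ∈ S, (#(nbhd R Z v) : ℝ) := edgeCount_eq_sum_card_nbhd
    _ < ∑ _v ∈ S, δ * #Z := sum_lt_sum_of_nonempty hS₀ fun _ hv => (mem_filter.1 hv).2
    _ = δ * (#S * #Z) := by rw [sum_const, nsmul_eq_mul]; ring

theorem pow_le_add_one_div_pow_succ {u : ℝ} (hu : 0 ≤ u) (N : ℕ) :
    u ^ N ≤ (u + 1 / (N + 1)) ^ (N + 1) := by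
  obtain rfl | hu := hu.eq_or_lt
  · obtain rfl | hN := N.eq_zero_or_pos
    · norm_num
    · rw [zero_pow hN.ne']; positivity
  have bernoulli := one_add_mul_le_pow (a := 1 / ((N + 1) * u))
    (by linarith [show 0 ≤ 1 / ((N + 1) * u) by positivity]) (N + 1)
  calc u ^ N ≤ u ^ (N + 1) * (1 + (N + 1 : ℕ) * (1 / ((N + 1) * u))) := by
        have : u ^ (N + 1) * (1 + (N + 1 : ℕ) * (1 / ((N + 1) * u))) = u ^ (N + 1) + u ^ N := by
          push_cast; field_simp; ring
        rw [this]
        exact le_add_of_nonneg_left (by positivity)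
    _ ≤ u ^ (N + 1) * (1 + 1 / ((N + 1) * u)) ^ (N + 1) := by gcongr
    _ = (u + 1 / (N + 1)) ^ (N + 1) := by rw [← mul_pow]; congr 1; field_simp

theorem le_mul_of_pow_succ_div_le {w w₁ e e₁ : ℝ} {N : ℕ} (hw : 0 ≤ w) (hw₁ : 0 < w₁)
    (hew : e ≤ w) (he₁ : 0 ≤ e₁)
    (h : e ^ (N + 1) / w ^ N ≤ e₁ ^ (N + 1) / w₁ ^ N) :
    e ≤ e₁ * (w / w₁ + 1 / (N + 1)) := by
  obtain rfl | hw := hw.eq_or_lt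
  · exact hew.trans (by positivity)
  refine le_of_pow_le_pow_left₀ N.succ_ne_zero (by positivity) ?_
  calc e ^ (N + 1) = e ^ (N + 1) / w ^ N * w ^ N := by field_simp
    _ ≤ e₁ ^ (N + 1) / w₁ ^ N * w ^ N := by gcongr
    _ = e₁ ^ (N + 1) * (w / w₁) ^ N := by rw [div_pow]; ring
    _ ≤ e₁ ^ (N + 1) * (w / w₁ + 1 / (N + 1)) ^ (N + 1) := by
      gcongr; exact pow_le_add_one_div_pow_succ (by positivity) N
    _ = (e₁ * (w / w₁ + 1 / (N + 1))) ^ (N + 1) := (mul_pow _ _ _).symm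

theorem mul_le_of_mul_le_pow_succ_div {w w₁ e₁ : ℝ} {N : ℕ} (hw₁ : 0 < w₁) (hww₁ : w₁ ≤ w)
    (he₁ : 0 ≤ e₁) (hew₁ : e₁ ≤ w₁) (hθ : 0 ≤ θ) (h : θ ^ (N + 1) * w ≤ e₁ ^ (N + 1) / w₁ ^ N) :
    θ ^ (N + 1) * w ≤ w₁ ∧ θ * w₁ ≤ e₁ := by
  constructor
  · calc θ ^ (N + 1) * w ≤ e₁ ^ (N + 1) / w₁ ^ N := h
      _ ≤ w₁ ^ (N + 1) / w₁ ^ N := by gcongr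
      _ = w₁ := by rw [pow_succ', mul_div_cancel_right₀ _ (by positivity)]
  · refine le_of_pow_le_pow_left₀ N.succ_ne_zero he₁ ?_
    calc (θ * w₁) ^ (N + 1) = θ ^ (N + 1) * w₁ * w₁ ^ N := by ring
      _ ≤ θ ^ (N + 1) * w * w₁ ^ N := by gcongr
      _ ≤ e₁ ^ (N + 1) := (le_div_iff₀ (by positivity)).1 h

-- The subpair maximizes `edgeCount ^ (N + 1) / (#X * #Y) ^ N`: it is as dense as `X, Y`, and none
-- of its own large subpairs can be much denser than it.
theorem exists_subpair_forall_edgeCount_le (hX : X.Nonempty) (hY : Y.Nonempty) (hθ : 0 < θ)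
    (he : θ * (#X * #Y) ≤ edgeCount R X Y) (N : ℕ) :
    ∃ X₁ ⊆ X, ∃ Y₁ ⊆ Y, θ ^ (N + 1) * (#X * #Y) ≤ #X₁ * #Y₁ ∧
      θ * (#X₁ * #Y₁) ≤ edgeCount R X₁ Y₁ ∧ ∀ X' ⊆ X₁, ∀ Y' ⊆ Y₁,
        edgeCount R X' Y' ≤ edgeCount R X₁ Y₁ * (#X' * #Y' / (#X₁ * #Y₁) + 1 / (N + 1)) := by
  have : (0 : ℝ) < #X * #Y := by exact_mod_cast Nat.mul_pos hX.card_pos hY.card_pos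
  obtain ⟨⟨X₁, Y₁⟩, hmem, hmax⟩ := exists_max_image (X.powerset ×ˢ Y.powerset)
    (fun Z => edgeCount R Z.1 Z.2 ^ (N + 1) / (#Z.1 * #Z.2 : ℝ) ^ N) ⟨(X, Y), by simp⟩
  simp only [mem_product, mem_powerset] at hmem hmax
  have hstart : θ ^ (N + 1) * (#X * #Y) ≤ edgeCount R X₁ Y₁ ^ (N + 1) / (#X₁ * #Y₁ : ℝ) ^ N := by
    refine .trans ?_ (hmax (X, Y) ⟨subset_rfl, subset_rfl⟩)
    rw [le_div_iff₀ (by positivity), mul_assoc, ← pow_succ', ← mul_pow]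
    exact pow_le_pow_left₀ (by positivity) he _
  have hw₁ : (0 : ℝ) < #X₁ * #Y₁ := by
    refine (by positivity : (0 : ℝ) ≤ #X₁ * #Y₁).lt_of_ne' fun h => ?_
    have he₀ : edgeCount R X₁ Y₁ = 0 := le_antisymm (h ▸ edgeCount_le_card_mul_card)
      edgeCount_nonneg
    rw [he₀, zero_pow N.succ_ne_zero, zero_div] at hstart
    exact hstart.not_gt (by positivity)
  obtain ⟨hsize, hdense⟩ := mul_le_of_mul_le_pow_succ_div hw₁
    (by gcongr; exacts [hmem.1, hmem.2]) edgeCount_nonneg edgeCount_le_card_mul_card hθ.le hstart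
  exact ⟨X₁, hmem.1, Y₁, hmem.2, hsize, hdense, fun X' hX' Y' hY' =>
    le_mul_of_pow_succ_div_le (by positivity) hw₁ edgeCount_le_card_mul_card edgeCount_nonneg
      (hmax (X', Y') ⟨hX'.trans hmem.1, hY'.trans hmem.2⟩)⟩

theorem mul_card_le_of_mul_card_mul_card_le (hX : X.Nonempty) (hX' : X' ⊆ X)
    (h : ρ * (#X * #Y) ≤ #X' * #Y') : ρ * #Y ≤ #Y' := by
  refine le_of_mul_le_mul_left (a := (#X : ℝ)) ?_ (by exact_mod_cast hX.card_pos)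
  calc #X * (ρ * #Y) = ρ * (#X * #Y) := by ring
    _ ≤ #X' * #Y' := h
    _ ≤ #X * #Y' := by gcongr

theorem edgeCount_sub_sub_eq (hX' : X' ⊆ X) (hY' : Y' ⊆ Y) :
    edgeCount R X Y - edgeCount R (X \ X') Y - edgeCount R X' (Y \ Y') = edgeCount R X' Y' := by
  have hleft := edgeCount_union_left (R := R) (Y := Y) (disjoint_sdiff (s := X') (t := X))
  have hright := edgeCount_union_right (R := R) (X := X') (disjoint_sdiff (s := Y') (t := Y))
  rw [union_sdiff_of_subset hX'] at hleft
  rw [union_sdiff_of_subset hY'] at hright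
  linarith

theorem isLowerRegular_of_forall_edgeCount_le {κ : ℝ} (hμ : 0 ≤ μ) (hε : 0 ≤ ε) (hε₁ : ε ≤ 1)
    (hX : X.Nonempty) (hY : Y.Nonempty) (hκ : 2 * κ ≤ ε * μ ^ 2)
    (he : θ * (#X * #Y) ≤ edgeCount R X Y)
    (h : ∀ X' ⊆ X, ∀ Y' ⊆ Y,
      edgeCount R X' Y' ≤ edgeCount R X Y * (#X' * #Y' / (#X * #Y) + κ)) :
    IsLowerRegular R μ (θ * (1 - ε)) X Y := by
  intro X' hX' Y' hY' hXμ hYμ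
  have hX₀ : (0 : ℝ) < #X := by exact_mod_cast hX.card_pos
  have hY₀ : (0 : ℝ) < #Y := by exact_mod_cast hY.card_pos
  have hloss : (1 - ε) * (#X' * #Y' / (#X * #Y) : ℝ) ≤ #X' * #Y' / (#X * #Y) - 2 * κ := by
    have : μ ^ 2 ≤ #X' * #Y' / (#X * #Y) := by
      rw [le_div_iff₀ (by positivity)]
      calc μ ^ 2 * (#X * #Y) = μ * #X * (μ * #Y) := by ring
        _ ≤ #X' * #Y' := by gcongr
    nlinarith [mul_le_mul_of_nonneg_left this hε]
  calc θ * (1 - ε) * (#X' * #Y')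
      = θ * (#X * #Y) * ((1 - ε) * (#X' * #Y' / (#X * #Y))) := by field_simp
    _ ≤ edgeCount R X Y * (#X' * #Y' / (#X * #Y) - 2 * κ) := by
      have := sub_nonneg.2 hε₁
      gcongr
      exact edgeCount_nonneg
    _ = edgeCount R X Y - edgeCount R X Y * (#(X \ X') * #Y / (#X * #Y) + κ) -
          edgeCount R X Y * (#X' * #(Y \ Y') / (#X * #Y) + κ) := by
      rw [cast_card_sdiff hX', cast_card_sdiff hY']
      field_simp
      ring
    _ ≤ edgeCount R X Y - edgeCount R (X \ X') Y - edgeCount R X' (Y \ Y') := by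
      gcongr
      · exact h _ sdiff_subset _ subset_rfl
      · exact h _ hX' _ sdiff_subset
    _ = edgeCount R X' Y' := edgeCount_sub_sub_eq hX' hY'

theorem exists_isLowerRegular_subpair (hθ : 0 < θ) (hμ : 0 < μ) (hε : 0 < ε) (hε₁ : ε ≤ 1) :
    ∃ ρ : ℝ, 0 < ρ ∧ ∀ {A B : Type u} {R : A → B → Prop} {X : Finset A} {Y : Finset B},
      X.Nonempty → Y.Nonempty → θ * (#X * #Y) ≤ edgeCount R X Y →
      ∃ X' ⊆ X, ∃ Y' ⊆ Y, ρ * #X ≤ #X' ∧ ρ * #Y ≤ #Y' ∧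
        IsLowerRegular R μ (θ * (1 - ε)) X' Y' := by
  obtain ⟨N, hN⟩ := exists_nat_one_div_lt (show 0 < ε * μ ^ 2 / 2 by positivity)
  refine ⟨θ ^ (N + 1), by positivity, fun {A B R X Y} hX hY he => ?_⟩
  obtain ⟨X', hX', Y', hY', hw, he', hmax⟩ := exists_subpair_forall_edgeCount_le hX hY hθ he N
  have hρX : θ ^ (N + 1) * #X ≤ #X' := mul_card_le_of_mul_card_mul_card_le hY hY' (by linarith)
  have hρY : θ ^ (N + 1) * #Y ≤ #Y' := mul_card_le_of_mul_card_mul_card_le hX hX' hw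
  have hne : ∀ {D : Type u} {Z Z' : Finset D}, Z.Nonempty → θ ^ (N + 1) * #Z ≤ #Z' →
      Z'.Nonempty := fun hZ h => card_pos.1 (by
    have := hZ.card_pos
    exact_mod_cast (by positivity : 0 < θ ^ (N + 1) * #_).trans_le h)
  exact ⟨X', hX', Y', hY', hρX, hρY, isLowerRegular_of_forall_edgeCount_le hμ.le hε.le hε₁
    (hne hX hρX) (hne hY hρY) (by linarith) he' hmax⟩

theorem exists_inv_card_mul_le_edgeCount {κ : Type*} [Fintype κ] [Nonempty κ] (C : A → B → κ)
    (X : Finset A) (Y : Finset B) :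
    ∃ c, (Fintype.card κ : ℝ)⁻¹ * (#X * #Y) ≤ edgeCount (fun a b => C a b = c) X Y := by
  obtain ⟨c, -, hc⟩ := exists_le_card_fiber_of_nsmul_le_card_of_maps_to
    (s := X ×ˢ Y) (t := univ) (f := fun z => C z.1 z.2)
    (b := (Fintype.card κ : ℝ)⁻¹ * (#X * #Y)) (fun _ _ => mem_univ _) univ_nonempty
    (by rw [card_univ, nsmul_eq_mul, card_product]; push_cast; field_simp; rfl)
  exact ⟨c, hc⟩

section PartRel

variable {V W : Type*}

/-- The bipartite graph with edge set `E` between the parts `a` and `b` of a blowup, whose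
vertices are the pairs `(v, x)` of an index `v` of a part and a vertex `x` of that part. -/
def partRel (E : Set (Sym2 (V × W))) (a b : V) (x y : W) : Prop := s((a, x), (b, y)) ∈ E

theorem flip_partRel (E : Set (Sym2 (V × W))) (a b : V) :
    flip (partRel E a b) = partRel E b a := by
  ext x y
  rw [flip, partRel, Sym2.eq_swap, partRel]

end PartRel

/-- Every pair of parts `X a`, `X b` with `s(a, b) ∈ F` is lower regular in the colour `c s(a, b)`
of the edge colouring `C`. -/
def IsLowerRegularFamily {V W κ : Type*} (C : Sym2 (V × W) → κ) (F : Set (Sym2 V)) (μ δ : ℝ)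
    (X : V → Finset W) (c : Sym2 V → κ) : Prop :=
  ∀ a b, s(a, b) ∈ F → IsLowerRegular (partRel (C ⁻¹' {c s(a, b)}) a b) μ δ (X a) (X b)

theorem IsLowerRegularFamily.mono {V W κ : Type*} {C : Sym2 (V × W) → κ} {F : Set (Sym2 V)}
    {X X' : V → Finset W} {c : Sym2 V → κ} (h : IsLowerRegularFamily C F (μ * ρ) δ X c)
    (hμ : 0 ≤ μ) (hX : ∀ v, X' v ⊆ X v ∧ ρ * #(X v) ≤ #(X' v)) :
    IsLowerRegularFamily C F μ δ X' c := fun a b hab =>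
  (h a b hab).mono hμ (hX a).1 (hX b).1 (hX a).2 (hX b).2

theorem IsLowerRegularFamily.insert {V W κ : Type*} {C : Sym2 (V × W) → κ} {F : Set (Sym2 V)}
    {X : V → Finset W} {c : Sym2 V → κ} {a b : V} {k : κ} (h : IsLowerRegularFamily C F μ δ X c)
    (hab : IsLowerRegular (partRel (C ⁻¹' {k}) a b) μ δ (X a) (X b)) :
    IsLowerRegularFamily C (insert s(a, b) F) μ δ X (Function.update c s(a, b) k) := by
  intro u v huv
  by_cases heq : s(u, v) = s(a, b)
  · rw [heq, Function.update_self]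
    rcases Sym2.eq_iff.1 heq with ⟨rfl, rfl⟩ | ⟨rfl, rfl⟩
    · exact hab
    · exact flip_partRel _ v u ▸ hab.flip
  · rw [Function.update_of_ne heq]
    exact h u v (huv.resolve_left heq)

theorem exists_refinement_of_pair {V W : Type*} {X : V → Finset W} {a b : V} {Xa Xb : Finset W}
    (hab : a ≠ b) (hXa : Xa ⊆ X a) (hXb : Xb ⊆ X b) (hρa : ρ * #(X a) ≤ #Xa)
    (hρb : ρ * #(X b) ≤ #Xb) (hρ₁ : ρ ≤ 1) :
    ∃ X' : V → Finset W, X' a = Xa ∧ X' b = Xb ∧ ∀ v, X' v ⊆ X v ∧ ρ * #(X v) ≤ #(X' v) := by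
  refine ⟨Function.update (Function.update X a Xa) b Xb, by simp [hab], by simp, fun v => ?_⟩
  obtain rfl | hvb := eq_or_ne v b
  · simp [hXb, hρb]
  obtain rfl | hva := eq_or_ne v a
  · simp [hvb, hXa, hρa]
  · simpa [hvb, hva] using mul_le_of_le_one_left (Nat.cast_nonneg _) hρ₁

theorem exists_isLowerRegular_monochromatic_subpair (κ : Type*) [Fintype κ] [Nonempty κ]
    (hμ : 0 < μ) (hε : 0 < ε) (hε₁ : ε ≤ 1) :
    ∃ ρ : ℝ, 0 < ρ ∧ ∀ {V : Type*} {W : Type u} (C : Sym2 (V × W) → κ) {a b : V}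
      {X : V → Finset W}, a ≠ b → (X a).Nonempty → (X b).Nonempty →
      ∃ X' : V → Finset W, (∀ v, X' v ⊆ X v ∧ ρ * #(X v) ≤ #(X' v)) ∧ ∃ k,
        IsLowerRegular (partRel (C ⁻¹' {k}) a b) μ ((Fintype.card κ : ℝ)⁻¹ * (1 - ε))
          (X' a) (X' b) := by
  obtain ⟨ρ, hρ, hpair⟩ := exists_isLowerRegular_subpair (θ := (Fintype.card κ : ℝ)⁻¹)
    (by positivity) hμ hε hε₁
  refine ⟨ρ, hρ, fun {V W} C {a b X} hab ha hb => ?_⟩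
  obtain ⟨k, hk⟩ := exists_inv_card_mul_le_edgeCount (fun x y => C s((a, x), (b, y))) (X a) (X b)
  obtain ⟨Xa, hXa, Xb, hXb, hρa, hρb, hreg⟩ := hpair ha hb hk
  have hρ₁ : ρ ≤ 1 := by
    have : (#Xa : ℝ) ≤ #(X a) := by exact_mod_cast card_le_card hXa
    exact le_of_mul_le_mul_right (by linarith) (by exact_mod_cast ha.card_pos : (0 : ℝ) < #(X a))
  obtain ⟨X', rfl, rfl, hX'⟩ := exists_refinement_of_pair hab hXa hXb hρa hρb hρ₁
  exact ⟨X', hX', k, hreg⟩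

theorem exists_isLowerRegularFamily {V : Type*} (κ : Type*) [Fintype κ] [Nonempty κ]
    (F : Finset (Sym2 V)) (hF : ∀ e ∈ F, ¬ e.IsDiag) (hμ : 0 < μ) (hε : 0 < ε) (hε₁ : ε ≤ 1) :
    ∃ ρ : ℝ, 0 < ρ ∧ ∀ {W : Type u} (C : Sym2 (V × W) → κ) (X : V → Finset W),
      (∀ v, (X v).Nonempty) → ∃ (X' : V → Finset W) (c : Sym2 V → κ),
        (∀ v, X' v ⊆ X v ∧ ρ * #(X v) ≤ #(X' v)) ∧
        IsLowerRegularFamily C F μ ((Fintype.card κ : ℝ)⁻¹ * (1 - ε)) X' c := by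
  induction F using Finset.induction_on generalizing μ with
  | empty =>
    exact ⟨1, one_pos, fun C X _ => ⟨X, fun _ => Classical.arbitrary κ, by simp,
      fun a b h => by simp at h⟩⟩
  | insert e F heF ih =>
    induction e with | _ a b
    have hab : a ≠ b := hF _ (mem_insert_self _ _)
    obtain ⟨ρ₁, hρ₁, hpair⟩ := exists_isLowerRegular_monochromatic_subpair κ hμ hε hε₁
    obtain ⟨ρ, hρ, hfam⟩ := ih (fun e he => hF e (mem_insert_of_mem he)) (mul_pos hμ hρ₁)
    refine ⟨ρ₁ * ρ, by positivity, fun C X hX => ?_⟩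
    obtain ⟨X', c, hX', hreg⟩ := hfam C X hX
    have hne : ∀ v, (X' v).Nonempty := fun v => card_pos.1 <| by
      have := (hX v).card_pos
      exact_mod_cast (by positivity : 0 < ρ * #(X v)).trans_le (hX' v).2
    obtain ⟨X'', hX'', k, hk⟩ := hpair C hab (hne a) (hne b)
    refine ⟨X'', Function.update c s(a, b) k,
      fun v => ⟨(hX'' v).1.trans (hX' v).1, ?_⟩, ?_⟩
    · calc ρ₁ * ρ * #(X v) = ρ₁ * (ρ * #(X v)) := mul_assoc ..
        _ ≤ ρ₁ * #(X' v) := by gcongr; exact (hX' v).2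
        _ ≤ #(X'' v) := (hX'' v).2
    · rw [coe_insert]
      exact (hreg.mono hμ.le hX'').insert hk

end Regularity

/-! ### Embedding into a lower regular blowup -/

section Embedding

variable {α : Type*} {W : Type u} {H : SimpleGraph α} {E : Set (Sym2 (α × W))}
  {X : α → Finset W} {S : Finset α} {x : α → W} {v w w' : α} {y : W} {μ δ η : ℝ} {m T : ℕ}

/-- The number of neighbours of `w` in `S`. -/
noncomputable def degreeIn (H : SimpleGraph α) (S : Finset α) (w : α) : ℕ := #{v ∈ S | H.Adj v w}

/-- The vertices of `X w` to which `w` can be mapped once the vertices `v ∈ S` have been mapped to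
`x v`; the values of `x` outside `S` are irrelevant. -/
noncomputable def candidates (H : SimpleGraph α) (E : Set (Sym2 (α × W))) (X : α → Finset W)
    (S : Finset α) (x : α → W) (w : α) : Finset W :=
  {y ∈ X w | ∀ v ∈ S, H.Adj v w → partRel E v w (x v) y}

/-- The partial embedding `x` of `S` leaves every other vertex of `H` as many candidates as
in a random graph of density `δ`. -/
def IsGood (H : SimpleGraph α) (E : Set (Sym2 (α × W))) (X : α → Finset W) (δ : ℝ)
    (S : Finset α) (x : α → W) : Prop :=
  ∀ w ∉ S, δ ^ degreeIn H S w * #(X w) ≤ #(candidates H E X S x w)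

/-- The images of `w` by which the partial embedding `x` of `S` extends to a good one. -/
noncomputable def extensions (H : SimpleGraph α) (E : Set (Sym2 (α × W))) (X : α → Finset W)
    (δ : ℝ) (S : Finset α) (x : α → W) (w : α) : Finset W :=
  {y ∈ candidates H E X S x w | IsGood H E X δ (insert w S) (Function.update x w y)}

theorem mem_candidates :
    y ∈ candidates H E X S x w ↔ y ∈ X w ∧ ∀ v ∈ S, H.Adj v w → partRel E v w (x v) y :=
  mem_filter

theorem mem_extensions :
    y ∈ extensions H E X δ S x w ↔
      y ∈ candidates H E X S x w ∧ IsGood H E X δ (insert w S) (Function.update x w y) :=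
  mem_filter

theorem candidates_subset : candidates H E X S x w ⊆ X w := filter_subset _ _

theorem extensions_subset_candidates : extensions H E X δ S x w ⊆ candidates H E X S x w :=
  filter_subset _ _

theorem extensions_subset : extensions H E X δ S x w ⊆ X w :=
  extensions_subset_candidates.trans candidates_subset

theorem isGood_empty (x : α → W) : IsGood H E X δ ∅ x := by
  simp [IsGood, degreeIn, candidates]

theorem degreeIn_insert_of_adj (hw : w ∉ S) (h : H.Adj w w') :
    degreeIn H (insert w S) w' = degreeIn H S w' + 1 := by
  rw [degreeIn, filter_insert, if_pos h, card_insert_of_notMem (by simp [hw]), degreeIn]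

theorem degreeIn_insert_of_not_adj (h : ¬ H.Adj w w') :
    degreeIn H (insert w S) w' = degreeIn H S w' := by
  rw [degreeIn, filter_insert, if_neg h, degreeIn]

theorem candidates_insert (hw : w ∉ S) :
    candidates H E X (insert w S) (Function.update x w y) w' =
      {z ∈ candidates H E X S x w' | H.Adj w w' → partRel E w w' y z} := by
  have hupd : ∀ v ∈ S, Function.update x w y v = x v := fun v hv =>
    Function.update_of_ne (ne_of_mem_of_not_mem hv hw) ..
  ext z
  simp +contextual only [candidates, mem_filter, mem_insert, forall_eq_or_imp,
    Function.update_self, hupd]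
  tauto

theorem IsGood.insert (h : IsGood H E X δ S x) (hδ : 0 ≤ δ) (hw : w ∉ S)
    (hy : ∀ w' ∉ S, H.Adj w w' →
      δ * #(candidates H E X S x w') ≤ #(nbhd (partRel E w w') (candidates H E X S x w') y)) :
    IsGood H E X δ (insert w S) (Function.update x w y) := by
  intro w' hw'
  have hw'S : w' ∉ S := fun h => hw' (mem_insert_of_mem h)
  rw [candidates_insert hw]
  by_cases hadj : H.Adj w w'
  · simp only [degreeIn_insert_of_adj hw hadj, hadj, forall_const]
    calc δ ^ (degreeIn H S w' + 1) * #(X w') = δ * (δ ^ degreeIn H S w' * #(X w')) := by ring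
      _ ≤ δ * #(candidates H E X S x w') := by gcongr; exact h w' hw'S
      _ ≤ _ := hy w' hw'S hadj
  · simpa [degreeIn_insert_of_not_adj hadj, hadj] using h w' hw'S

/-- A family of good partial embeddings `x i` of `S` which together span a blowup: all pairs of
parts along an edge of `H` are complete, even between distinct members of the family. -/
structure IsFamily (H : SimpleGraph α) (E : Set (Sym2 (α × W))) (X : α → Finset W) (δ : ℝ)
    (S : Finset α) {ι : Type*} (x : ι → α → W) : Prop where
  isGood : ∀ i, IsGood H E X δ S (x i)
  injective : ∀ v ∈ S, Function.Injective (fun i => x i v)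
  complete : ∀ v ∈ S, ∀ w ∈ S, H.Adj v w → ∀ i j, partRel E v w (x i v) (x j w)

theorem IsFamily.extend {ι κ : Type*} {x : ι → α → W} (hx : IsFamily H E X δ S x) (hw : w ∉ S)
    (f : κ ↪ ι) (g : κ ↪ W) (hfg : ∀ i j, g j ∈ extensions H E X δ S (x (f i)) w) :
    IsFamily H E X δ (insert w S) fun i => Function.update (x (f i)) w (g i) := by
  have hupd : ∀ v ∈ S, ∀ i, Function.update (x (f i)) w (g i) v = x (f i) v := fun v hv i =>
    Function.update_of_ne (ne_of_mem_of_not_mem hv hw) ..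
  have hadj : ∀ v ∈ S, H.Adj v w → ∀ i j, partRel E v w (x (f i) v) (g j) :=
    fun v hv hvw i j => (mem_candidates.1 (mem_extensions.1 (hfg i j)).1).2 v hv hvw
  refine ⟨fun i => (mem_extensions.1 (hfg i i)).2, forall_mem_insert .. |>.2 ⟨?_, fun v hv => ?_⟩,
    forall_mem_insert .. |>.2 ⟨?_, fun v hv => ?_⟩⟩
  · simpa only [Function.update_self] using g.injective
  · simp only [hupd v hv]
    exact (hx.injective v hv).comp f.injective
  · refine forall_mem_insert .. |>.2 ⟨fun h => absurd h (H.irrefl), fun v hv hwv i j => ?_⟩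
    rw [hupd v hv, Function.update_self, ← flip_partRel]
    exact hadj v hv hwv.symm j i
  · refine forall_mem_insert .. |>.2 ⟨fun hvw i j => ?_, fun u hu hvu i j => ?_⟩
    · rw [hupd v hv, Function.update_self]
      exact hadj v hv hvw i j
    · rw [hupd v hv, hupd u hu]
      exact hx.complete v hv u hu hvu _ _

/-- `IsFamily` for a family of `m` partial embeddings. -/
def HasFamily (H : SimpleGraph α) (E : Set (Sym2 (α × W))) (X : α → Finset W) (δ : ℝ)
    (S : Finset α) (m : ℕ) : Prop :=
  ∃ x : Fin m → α → W, IsFamily H E X δ S x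

theorem IsFamily.hasFamily_insert {ι : Type*} {x : ι → α → W} {I : Finset ι}
    (hx : IsFamily H E X δ S x) (hw : w ∉ S)
    (h : HasBiclique (fun i y => y ∈ extensions H E X δ S (x i) w) I (X w) m m) :
    HasFamily H E X δ (insert w S) m := by
  obtain ⟨f, g, -, -, hfg⟩ := h.exists_embedding
  exact ⟨_, hx.extend hw f g hfg⟩

/-- The edges of `H` with both ends in `S`. -/
noncomputable def edgesIn (H : SimpleGraph α) (S : Finset α) : Finset (Sym2 α) :=
  {e ∈ S.sym2 | e ∈ H.edgeSet}

theorem card_edgesIn_add_degreeIn_le (hw : w ∉ S) :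
    #(edgesIn H S) + degreeIn H S w ≤ #(edgesIn H (insert w S)) := by
  rw [degreeIn, ← card_image_of_injective _ (Sym2.mkEmbedding w).injective,
    ← card_union_of_disjoint]
  · refine card_le_card (union_subset (fun e he => ?_) (image_subset_iff.2 fun a ha => ?_))
    · obtain ⟨heS, heH⟩ := mem_filter.1 he
      exact mem_filter.2 ⟨sym2_mono (subset_insert w S) heS, heH⟩
    · obtain ⟨haS, haw⟩ := mem_filter.1 ha
      exact mem_filter.2 ⟨mk_mem_sym2_iff.2 ⟨mem_insert_self w S, mem_insert_of_mem haS⟩, haw.symm⟩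
  · refine disjoint_left.2 fun e he he' => ?_
    obtain ⟨a, -, rfl⟩ := mem_image.1 he'
    exact hw (mk_mem_sym2_iff.1 (mem_filter.1 he).1).1

variable [Fintype α]

theorem degreeIn_le_card : degreeIn H S w ≤ Fintype.card α := card_le_univ _

/-- A blowup with parts `X` whose edges `E` are lower regular along `H`, with `μ` so small that
embedding `H` vertex by vertex wastes only a proportion `η` of the candidates at each step. -/
structure IsEmbeddingHost (H : SimpleGraph α) (E : Set (Sym2 (α × W))) (X : α → Finset W)
    (μ δ η : ℝ) : Prop where
  nonempty : ∀ a, (X a).Nonempty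
  mu_pos : 0 < μ
  delta_pos : 0 < δ
  delta_le_one : δ ≤ 1
  eta_pos : 0 < η
  eta_lt_one : η < 1
  mu_le : μ ≤ δ ^ Fintype.card α
  card_mul_mu_le : Fintype.card α * μ ≤ η * δ ^ Fintype.card α
  isLowerRegular : ∀ a b, H.Adj a b → IsLowerRegular (partRel E a b) μ δ (X a) (X b)

theorem IsEmbeddingHost.card_atypical_le (hH : IsEmbeddingHost H E X μ δ η) (h : IsGood H E X δ S x)
    (hw' : w' ∉ S) (hadj : H.Adj w w') :
    (#{y ∈ X w | #(nbhd (partRel E w w') (candidates H E X S x w') y) <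
      δ * #(candidates H E X S x w')} : ℝ) ≤ μ * #(X w) := by
  refine (hH.isLowerRegular w w' hadj).card_atypical_le hH.mu_pos (hH.nonempty w)
    candidates_subset (.trans ?_ (h w' hw'))
  gcongr
  exact hH.mu_le.trans (pow_le_pow_of_le_one hH.delta_pos.le hH.delta_le_one degreeIn_le_card)

theorem IsEmbeddingHost.card_candidates_sdiff_extensions_le (hH : IsEmbeddingHost H E X μ δ η)
    (h : IsGood H E X δ S x) (hw : w ∉ S) :
    (#(candidates H E X S x w \ extensions H E X δ S x w) : ℝ) ≤
      Fintype.card α * (μ * #(X w)) := by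
  set bad : α → Finset W := fun w' => {y ∈ X w |
    #(nbhd (partRel E w w') (candidates H E X S x w') y) < δ * #(candidates H E X S x w')}
  have hcover : candidates H E X S x w \ extensions H E X δ S x w ⊆
      ({w' | w' ∉ S ∧ H.Adj w w'} : Finset α).biUnion bad := by
    intro y hy
    obtain ⟨hyc, hye⟩ := mem_sdiff.1 hy
    by_contra hbad
    refine hye (mem_extensions.2 ⟨hyc, h.insert hH.delta_pos.le hw fun w' hw' hadj => ?_⟩)
    by_contra! hlt
    exact hbad (mem_biUnion.2 ⟨w', by simp [hw', hadj],
      mem_filter.2 ⟨candidates_subset hyc, hlt⟩⟩)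
  calc (#(candidates H E X S x w \ extensions H E X δ S x w) : ℝ)
      ≤ ∑ w' with w' ∉ S ∧ H.Adj w w', (#(bad w') : ℝ) := by
        exact_mod_cast (card_le_card hcover).trans card_biUnion_le
    _ ≤ ∑ w' with w' ∉ S ∧ H.Adj w w', μ * #(X w) := sum_le_sum fun w' hw' =>
        hH.card_atypical_le h (mem_filter.1 hw').2.1 (mem_filter.1 hw').2.2
    _ ≤ Fintype.card α * (μ * #(X w)) := by
      rw [sum_const, nsmul_eq_mul]
      have := hH.mu_pos
      gcongr
      exact card_le_univ _

theorem IsEmbeddingHost.le_card_extensions (hH : IsEmbeddingHost H E X μ δ η)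
    (h : IsGood H E X δ S x) (hw : w ∉ S) :
    δ ^ degreeIn H S w * (1 - η) * #(X w) ≤ #(extensions H E X δ S x w) := by
  have hloss : Fintype.card α * (μ * #(X w)) ≤ η * δ ^ degreeIn H S w * #(X w) := by
    rw [← mul_assoc]
    refine mul_le_mul_of_nonneg_right (hH.card_mul_mu_le.trans ?_) (Nat.cast_nonneg _)
    refine mul_le_mul_of_nonneg_left ?_ hH.eta_pos.le
    exact pow_le_pow_of_le_one hH.delta_pos.le hH.delta_le_one degreeIn_le_card
  have hsdiff := hH.card_candidates_sdiff_extensions_le h hw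
  rw [cast_card_sdiff extensions_subset_candidates] at hsdiff
  linarith [h w hw]

theorem IsEmbeddingHost.le_edgeCount_extensions (hH : IsEmbeddingHost H E X μ δ η) {ι : Type*}
    [Fintype ι] {x : ι → α → W} (hx : ∀ i, IsGood H E X δ S (x i)) (hw : w ∉ S) :
    δ ^ degreeIn H S w * (1 - η) * (#(univ : Finset ι) * #(X w)) ≤
      edgeCount (fun i y => y ∈ extensions H E X δ S (x i) w) univ (X w) := by
  rw [edgeCount_eq_sum_card_nbhd]
  calc δ ^ degreeIn H S w * (1 - η) * (#(univ : Finset ι) * #(X w))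
      = ∑ i : ι, δ ^ degreeIn H S w * (1 - η) * #(X w) := by
        rw [sum_const, nsmul_eq_mul]; ring
    _ ≤ _ := by
      gcongr with i
      refine (hH.le_card_extensions (hx i) hw).trans ?_
      exact_mod_cast card_le_card fun y hy => mem_nbhd.2 ⟨extensions_subset hy, hy⟩

theorem IsEmbeddingHost.hasFamily_pair (hH : IsEmbeddingHost H E X μ δ η) (hvw : H.Adj v w)
    (hbase : ∀ {ι : Type u} {R : ι → W → Prop} {I : Finset ι}, (1 - η) * #(X v) ≤ #I →
      δ * (1 - η) * (#I * #(X w)) ≤ edgeCount R I (X w) → HasBiclique R I (X w) T T) :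
    HasFamily H E X δ {w, v} T := by
  choose x₀ _ using hH.nonempty
  set x : {y // y ∈ extensions H E X δ ∅ x₀ v} → α → W := fun y => Function.update x₀ v y
  have hx : IsFamily H E X δ {v} x := by
    refine ⟨fun y => by simpa using (mem_extensions.1 y.2).2, ?_, ?_⟩
    · simp [x, Subtype.val_injective]
    · simp
  have hwv : w ∉ ({v} : Finset α) := by simpa using hvw.ne'
  refine hx.hasFamily_insert (I := univ) hwv (hbase ?_ ?_)
  · simpa [degreeIn] using hH.le_card_extensions (isGood_empty x₀) (notMem_empty v)
  · have hdeg : degreeIn H {v} w = 1 := by simp [degreeIn, filter_singleton, hvw]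
    simpa only [hdeg, pow_one] using hH.le_edgeCount_extensions hx.isGood hwv

theorem IsEmbeddingHost.hasFamily_insert (hH : IsEmbeddingHost H E X μ δ η) (hm : 0 < m)
    (hx : HasFamily H E X δ S m) (hw : w ∉ S)
    (hX : 2 ^ m * (m : ℝ) ≤ η * (δ ^ Fintype.card α * (1 - η)) * #(X w)) :
    ∃ m' ≤ m, (1 - η) ^ 2 * δ ^ degreeIn H S w * m ≤ m' ∧ HasFamily H E X δ (insert w S) m' := by
  obtain ⟨x, hx⟩ := hx
  have hη := sub_pos.2 hH.eta_lt_one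
  have hδ := hH.delta_pos
  obtain ⟨m', hm'm, hm', hbi⟩ := exists_hasBiclique_of_mul_le_edgeCount (η := η)
    (univ_nonempty_iff.2 (Fin.pos_iff_nonempty.1 hm))
    (hH.le_edgeCount_extensions hx.isGood hw) (by positivity) hH.eta_lt_one.le (by
      rw [card_univ, Fintype.card_fin]
      refine hX.trans ?_
      have := hH.eta_pos
      gcongr ?_ * (?_ * _) * _
      exact pow_le_pow_of_le_one hδ.le hH.delta_le_one degreeIn_le_card)
  rw [card_univ, Fintype.card_fin] at hm' hm'm
  exact ⟨m', hm'm, by linarith, hx.hasFamily_insert hw hbi⟩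

theorem IsEmbeddingHost.exists_hasFamily_insert_of_le (hH : IsEmbeddingHost H E X μ δ η)
    (hT : 0 < T) (hmT : m ≤ T)
    (hm : δ ^ #(edgesIn H S) * ((1 - η) ^ 2) ^ #S * T ≤ δ * m)
    (hx : HasFamily H E X δ S m) (hw : w ∉ S)
    (hX : 2 ^ T * (T : ℝ) ≤ η * (δ ^ Fintype.card α * (1 - η)) * #(X w)) :
    ∃ m' ≤ T, δ ^ #(edgesIn H (insert w S)) * ((1 - η) ^ 2) ^ #(insert w S) * T ≤ δ * m' ∧
      HasFamily H E X δ (insert w S) m' := by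
  have hδ := hH.delta_pos
  have hη := sub_pos.2 hH.eta_lt_one
  have : (0 : ℝ) < T := by exact_mod_cast hT
  have hm₀ : 0 < m := by
    have : 0 < δ * (m : ℝ) := lt_of_lt_of_le (by positivity) hm
    exact_mod_cast pos_of_mul_pos_right this hδ.le
  obtain ⟨m', hm'm, hm', hx'⟩ := hH.hasFamily_insert hm₀ hx hw (.trans (by gcongr; norm_num) hX)
  refine ⟨m', hm'm.trans hmT, ?_, hx'⟩
  rw [card_insert_of_notMem hw]
  calc δ ^ #(edgesIn H (insert w S)) * ((1 - η) ^ 2) ^ (#S + 1) * T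
      ≤ δ ^ (#(edgesIn H S) + degreeIn H S w) * ((1 - η) ^ 2) ^ (#S + 1) * T := by
        gcongr ?_ * _ * _
        exact pow_le_pow_of_le_one hδ.le hH.delta_le_one (card_edgesIn_add_degreeIn_le hw)
    _ = δ ^ #(edgesIn H S) * ((1 - η) ^ 2) ^ #S * T * ((1 - η) ^ 2 * δ ^ degreeIn H S w) := by ring
    _ ≤ δ * m * ((1 - η) ^ 2 * δ ^ degreeIn H S w) := by gcongr
    _ = δ * ((1 - η) ^ 2 * δ ^ degreeIn H S w * m) := by ring
    _ ≤ δ * m' := by gcongr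

theorem card_edgesIn_univ : #(edgesIn H univ) = Nat.card H.edgeSet := by
  simp [edgesIn]

theorem IsEmbeddingHost.exists_hasFamily_univ (hH : IsEmbeddingHost H E X μ δ η) (hT : 0 < T)
    (hvw : H.Adj v w)
    (hbase : ∀ {ι : Type u} {R : ι → W → Prop} {I : Finset ι}, (1 - η) * #(X v) ≤ #I →
      δ * (1 - η) * (#I * #(X w)) ≤ edgeCount R I (X w) → HasBiclique R I (X w) T T)
    (hX : ∀ w, 2 ^ T * (T : ℝ) ≤ η * (δ ^ Fintype.card α * (1 - η)) * #(X w)) :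
    ∃ m : ℕ, δ ^ Nat.card H.edgeSet * ((1 - η) ^ 2) ^ Fintype.card α * T ≤ δ * m ∧
      HasFamily H E X δ univ m := by
  have hδ := hH.delta_pos
  have hη := sub_pos.2 hH.eta_lt_one
  suffices key : ∀ U : Finset α, ∃ m ≤ T,
      δ ^ #(edgesIn H ({w, v} ∪ U)) * ((1 - η) ^ 2) ^ #({w, v} ∪ U) * T ≤ δ * m ∧
        HasFamily H E X δ ({w, v} ∪ U) m by
    obtain ⟨m, -, hm, hx⟩ := key univ
    rw [union_eq_right.2 (subset_univ _)] at hm hx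
    exact ⟨m, by rwa [card_edgesIn_univ, card_univ] at hm, hx⟩
  intro U
  induction U using Finset.induction_on with
  | empty =>
    rw [union_empty]
    refine ⟨T, le_rfl, ?_, hH.hasFamily_pair hvw hbase⟩
    have hedge : s(w, v) ∈ edgesIn H {w, v} :=
      mem_filter.2 ⟨mk_mem_sym2_iff.2 ⟨by simp, by simp⟩, hvw.symm⟩
    have hpow : δ ^ #(edgesIn H {w, v}) ≤ δ :=
      pow_le_of_le_one hδ.le hH.delta_le_one (card_ne_zero_of_mem hedge)
    have hone : ((1 - η) ^ 2) ^ #({w, v} : Finset α) ≤ 1 :=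
      pow_le_one₀ (by positivity) (pow_le_one₀ hη.le (by linarith [hH.eta_pos]))
    calc _ ≤ δ * 1 * T := by gcongr
      _ = δ * T := by ring
  | insert a U _ ih =>
    obtain ⟨m, hmT, hm, hx⟩ := ih
    rw [union_insert]
    by_cases ha : a ∈ {w, v} ∪ U
    · rw [insert_eq_of_mem ha]
      exact ⟨m, hmT, hm, hx⟩
    · exact hH.exists_hasFamily_insert_of_le hT hmT hm hx ha (hX a)

end Embedding

/-! ### Bounding blowup Ramsey numbers -/

section BlowupRamsey

variable {α V : Type} {H : SimpleGraph α} {G : SimpleGraph V} {v w : α} {r n t m : ℕ}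
  {p δ η γ : ℝ}

theorem exists_forall_two_pow_mul_le (hp : 0 < p) (hp₁ : 2 * p < 1) :
    ∃ C : ℝ, 0 ≤ C ∧ ∀ T : ℕ, 2 ^ T * (T : ℝ) ≤ C * p⁻¹ ^ T := by
  have hbdd := (tendsto_pow_const_mul_const_pow_of_lt_one 1 (by positivity) hp₁).bddAbove_range
  obtain ⟨C, hC⟩ := hbdd
  have hC' : ∀ T : ℕ, (T : ℝ) ^ 1 * (2 * p) ^ T ≤ C := fun T => hC ⟨T, rfl⟩
  refine ⟨C, by simpa using hC' 0, fun T => ?_⟩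
  calc 2 ^ T * (T : ℝ) = (T : ℝ) ^ 1 * (2 * p) ^ T * p⁻¹ ^ T := by
        rw [mul_pow, inv_pow]; field_simp
    _ ≤ C * p⁻¹ ^ T := by gcongr; exact hC' T

theorem exists_forall_hasBiclique_and_two_pow_mul_le {θ ν : ℝ} (hp : 0 < p) (hp₁ : 2 * p < 1)
    (hθ : 0 < θ) (hν : 0 < ν) :
    ∃ D : ℝ, 0 < D ∧ ∀ T : ℕ, 0 < T → 2 ^ T * (T : ℝ) ≤ ν * (D * p⁻¹ ^ T) ∧
      ∀ {A B : Type u} {R : A → B → Prop} {X : Finset A} {Y : Finset B},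
        θ * (D * p⁻¹ ^ T) ≤ #X → θ * (D * p⁻¹ ^ T) ≤ #Y → p * (#X * #Y) ≤ edgeCount R X Y →
        HasBiclique R X Y T T := by
  obtain ⟨a, ha, hbi⟩ := exists_forall_hasBiclique hp (by linarith)
  obtain ⟨C, hC₀, hC⟩ := exists_forall_two_pow_mul_le hp hp₁
  refine ⟨a / θ + C / ν, by positivity, fun T hT => ?_⟩
  have ha_le : a * p⁻¹ ^ T ≤ θ * ((a / θ + C / ν) * p⁻¹ ^ T) := by
    calc a * p⁻¹ ^ T = θ * ((a / θ + 0) * p⁻¹ ^ T) := by field_simp; simp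
      _ ≤ θ * ((a / θ + C / ν) * p⁻¹ ^ T) := by gcongr; positivity
  have hC_le : C * p⁻¹ ^ T ≤ ν * ((a / θ + C / ν) * p⁻¹ ^ T) := by
    calc C * p⁻¹ ^ T = ν * ((0 + C / ν) * p⁻¹ ^ T) := by field_simp; simp
      _ ≤ ν * ((a / θ + C / ν) * p⁻¹ ^ T) := by gcongr; positivity
  exact ⟨(hC T).trans hC_le, fun hX hY => hbi T hT (ha_le.trans hX) (ha_le.trans hY)⟩

theorem exists_inv_rpow_inv_le {x : ℝ} (hx : 1 < x) (hγ : 0 < γ) {k : ℕ} (hk : k ≠ 0) (h : ℕ) :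
    ∃ η : ℝ, 0 < η ∧ η < 1 ∧
      (x⁻¹ * (1 - η) * (1 - η))⁻¹ ^ ((x⁻¹ * (1 - η)) ^ k * ((1 - η) ^ 2) ^ h)⁻¹ ≤
        x ^ (x + γ) ^ k := by
  have hx₀ : x ≠ 0 := by positivity
  set f : ℝ → ℝ := fun η =>
    (x⁻¹ * (1 - η) * (1 - η))⁻¹ ^ ((x⁻¹ * (1 - η)) ^ k * ((1 - η) ^ 2) ^ h)⁻¹
  have hf : ContinuousAt f 0 := by
    refine ContinuousAt.rpow (ContinuousAt.inv₀ (by fun_prop) (by simpa using hx₀))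
      (ContinuousAt.inv₀ (by fun_prop) (by simp [hx₀])) (.inl (by simpa using hx₀))
  have hf₀ : f 0 < x ^ (x + γ) ^ k := by
    simp only [f, sub_zero, mul_one, one_pow, inv_inv, inv_pow]
    exact Real.rpow_lt_rpow_of_exponent_lt hx (pow_lt_pow_left₀ (by linarith) (by positivity) hk)
  obtain ⟨η, hηf, hη, hη₁⟩ := (((hf.eventually_lt_const hf₀).filter_mono nhdsWithin_le_nhds).and
    (Ioo_mem_nhdsGT one_pos)).exists
  exact ⟨η, hη, hη₁, hηf.le⟩

theorem exists_natCast_le_add_one_mul {P : ℕ → Prop} {a b : ℝ} (hab : 0 ≤ a * b) (hb : 1 ≤ b)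
    (h : ∀ n : ℕ, a * b ≤ n → P n) : ∃ n : ℕ, n ≤ (a + 1) * b ∧ P n :=
  ⟨⌈a * b⌉₊, by linarith [Nat.ceil_lt_add_one hab], h _ (Nat.le_ceil _)⟩

theorem ArrowsFor.exists_forall_blowupArrow_of_card_edgeSet_le_one [Finite α] (hG : ArrowsFor G H r)
    (hr : 2 ≤ r) (hvw : H.Adj v w) (hH : Nat.card H.edgeSet ≤ 1) :
    ∃ a : ℝ, 0 < a ∧ ∀ t n : ℕ, 0 < t → a * r ^ t ≤ n → BlowupArrow G H r n t := by
  have : NeZero r := ⟨by omega⟩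
  have hr₁ : (1 : ℝ) < r := by exact_mod_cast hr
  have hedge : ∀ a b, H.Adj a b → s(a, b) = s(v, w) := fun a b hab =>
    congrArg Subtype.val
      ((Finite.card_le_one_iff_subsingleton.1 hH).elim ⟨s(a, b), hab⟩ ⟨s(v, w), hvw⟩)
  obtain ⟨φ, _, hφ, hφG⟩ := hG fun _ => 0
  obtain ⟨a, ha, hbi⟩ := exists_forall_hasBiclique (p := (r : ℝ)⁻¹) (by positivity)
    (inv_lt_one_of_one_lt₀ hr₁)
  refine ⟨a, ha, fun t n ht hn C => ?_⟩
  have hcard : a * (r : ℝ)⁻¹⁻¹ ^ t ≤ #(univ : Finset (Fin n)) := by simpa using hn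
  obtain ⟨c, hc⟩ := exists_inv_card_mul_le_edgeCount (fun i j => C s((φ v, i), (φ w, j)))
    (univ : Finset (Fin n)) univ
  rw [Fintype.card_fin] at hc
  obtain ⟨f, g, -, -, hfg⟩ := (hbi t ht hcard hcard hc).exists_embedding
  refine ⟨φ, fun a => if a = v then f else g, c, hφ, fun a => ?_, fun a b hab =>
    ⟨(hφG a b hab).1, fun i j => ?_⟩⟩
  · dsimp only
    split_ifs
    exacts [f.injective, g.injective]
  · obtain ⟨rfl, rfl⟩ | ⟨rfl, rfl⟩ := Sym2.eq_iff.1 (hedge a b hab)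
    · simpa [hvw.ne'] using hfg i j
    · rw [Sym2.eq_swap]
      simpa [hvw.ne'] using hfg j i

theorem HasFamily.hasMonoCanonicalBlowup [Fintype α] {φ : α → V}
    {C : Sym2 (V × Fin n) → Fin r} {c : Fin r} {X : α → Finset (Fin n)}
    (h : HasFamily H (Sym2.map (Prod.map φ id) ⁻¹' (C ⁻¹' {c})) X δ univ m)
    (hφ : Function.Injective φ) (hφG : ∀ a b, H.Adj a b → G.Adj (φ a) (φ b)) (htm : t ≤ m) :
    HasMonoCanonicalBlowup G H n t r C := by
  obtain ⟨x, hx⟩ := h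
  refine ⟨φ, fun a i => x (Fin.castLE htm i) a, c, hφ, fun a => ?_, fun a b hab =>
    ⟨hφG a b hab, fun i j => ?_⟩⟩
  · exact (hx.injective a (mem_univ a)).comp (Fin.castLE_injective htm)
  · exact hx.complete a (mem_univ a) b (mem_univ b) hab _ _

theorem ArrowsFor.exists_isEmbeddingHost [Fintype α] [Finite V] (hG : ArrowsFor G H r)
    (hr : 1 < r) (hη : 0 < η) (hη₁ : η < 1) :
    ∃ μ ρ : ℝ, 0 < ρ ∧ ∀ n, 0 < n → ∀ C : Sym2 (V × Fin n) → Fin r,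
      ∃ (φ : α → V) (c : Fin r) (X : α → Finset (Fin n)),
        Function.Injective φ ∧ (∀ a b, H.Adj a b → G.Adj (φ a) (φ b)) ∧ (∀ a, ρ * n ≤ #(X a)) ∧
        IsEmbeddingHost H (Sym2.map (Prod.map φ id) ⁻¹' (C ⁻¹' {c})) X μ
          ((r : ℝ)⁻¹ * (1 - η)) η := by
  cases nonempty_fintype V
  have : NeZero r := ⟨by omega⟩
  have hr₀ : (0 : ℝ) < r := by exact_mod_cast Nat.pos_of_neZero r
  set δ := (r : ℝ)⁻¹ * (1 - η)
  have hδ : 0 < δ := mul_pos (inv_pos.2 hr₀) (by linarith)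
  have hδ₁ : δ ≤ 1 := mul_le_one₀ (inv_le_one_of_one_le₀ (by exact_mod_cast hr.le))
    (by linarith) (by linarith)
  set h := Fintype.card α
  set μ := η * δ ^ h / (h + 1)
  have hμ : 0 < μ := by positivity
  have hμ_eq : (h + 1) * μ = η * δ ^ h := mul_div_cancel₀ _ (by positivity)
  have : 0 < δ ^ h := by positivity
  have hhμ : 0 ≤ h * μ := by positivity
  obtain ⟨ρ, hρ, hreg⟩ := exists_isLowerRegularFamily (Fin r) G.edgeFinset
    (fun e he => G.not_isDiag_of_mem_edgeFinset he) hμ hη hη₁.le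
  refine ⟨μ, ρ, hρ, fun n hn C => ?_⟩
  have hn₀ : (0 : ℝ) < n := by exact_mod_cast hn
  have : NeZero n := ⟨hn.ne'⟩
  obtain ⟨X, c, hX, hXc⟩ := hreg C (fun _ => univ) fun _ => univ_nonempty
  rw [Fintype.card_fin] at hXc
  have hXn : ∀ v, ρ * n ≤ #(X v) := fun v => by simpa using (hX v).2
  obtain ⟨φ, c₀, hφ, hφG⟩ := hG c
  refine ⟨φ, c₀, X ∘ φ, hφ, fun a b hab => (hφG a b hab).1, fun a => hXn (φ a), ?_⟩
  exact
    { nonempty := fun a => card_pos.1 (by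
        exact_mod_cast (mul_pos hρ hn₀).trans_le (hXn (φ a)))
      mu_pos := hμ
      delta_pos := hδ
      delta_le_one := hδ₁
      eta_pos := hη
      eta_lt_one := hη₁
      mu_le := by nlinarith
      card_mul_mu_le := by linarith
      isLowerRegular := fun a b hab => by
        have h := hXc (φ a) (φ b) (by simpa using (hφG a b hab).1)
        rwa [(hφG a b hab).2] at h }

theorem ArrowsFor.exists_forall_blowupArrow [Fintype α] [Finite V] (hG : ArrowsFor G H r)
    (hr : 2 ≤ r) (hvw : H.Adj v w) (hη : 0 < η) (hη₁ : η < 1) :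
    ∃ D : ℝ, 0 < D ∧ ∀ t T n : ℕ, 0 < T → D * ((r : ℝ)⁻¹ * (1 - η) * (1 - η))⁻¹ ^ T ≤ n →
      t ≤ ((r : ℝ)⁻¹ * (1 - η)) ^ (Nat.card H.edgeSet - 1) *
        ((1 - η) ^ 2) ^ Fintype.card α * T → BlowupArrow G H r n t := by
  obtain ⟨μ, ρ, hρ, hhost⟩ := hG.exists_isEmbeddingHost hr hη hη₁
  have hη' : 0 < 1 - η := by linarith
  have hr₂ : (r : ℝ)⁻¹ ≤ 2⁻¹ := by gcongr; exact_mod_cast hr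
  have : (0 : ℝ) < r := by positivity
  set δ := (r : ℝ)⁻¹ * (1 - η)
  set p := δ * (1 - η)
  have hδ : 0 < δ := by positivity
  have hp : 0 < p := by positivity
  have hδ₁ : δ < 2⁻¹ := by nlinarith
  have hp₁ : p < 2⁻¹ := by nlinarith
  set ν := η * (δ ^ Fintype.card α * (1 - η))
  have hν : 0 < ν := by positivity
  obtain ⟨D, hD, hT⟩ :=
    exists_forall_hasBiclique_and_two_pow_mul_le hp (by linarith : 2 * p < 1) hη' hν
  refine ⟨D / ρ, by positivity, fun t T n hT₀ hn htT C => ?_⟩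
  have hp' : 0 < p⁻¹ ^ T := by positivity
  have hn₀ : 0 < n := by
    have : (0 : ℝ) < n := lt_of_lt_of_le (by positivity) hn
    exact_mod_cast this
  obtain ⟨φ, c, X, hφ, hφG, hXn, hH⟩ := hhost n hn₀ C
  have hX : ∀ u, D * p⁻¹ ^ T ≤ #(X u) := fun u => by
    refine .trans ?_ (hXn u)
    rwa [div_mul_eq_mul_div, div_le_iff₀' hρ] at hn
  have hXη : ∀ u, (1 - η) * (D * p⁻¹ ^ T) ≤ (1 - η) * #(X u) := fun u => by gcongr; exact hX u
  obtain ⟨hT₂, hbi⟩ := hT T hT₀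
  obtain ⟨m, hm, hx⟩ := hH.exists_hasFamily_univ hT₀ hvw
    (fun hI => hbi ((hXη v).trans hI)
      ((hXη w).trans (mul_le_of_le_one_left (Nat.cast_nonneg _) (by linarith))))
    (fun u => hT₂.trans (by gcongr; exact hX u))
  refine hx.hasMonoCanonicalBlowup hφ hφG ?_
  have hcard : Nat.card H.edgeSet ≠ 0 := by
    have : Nonempty H.edgeSet := ⟨⟨s(v, w), hvw⟩⟩
    exact Nat.card_pos.ne'
  rw [← mul_pow_sub_one hcard, mul_assoc, mul_assoc, ← mul_assoc (δ ^ _)] at hm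
  exact_mod_cast htT.trans (le_of_mul_le_mul_left hm hδ)

theorem ArrowsFor.exists_forall_blowupArrow_of_one_lt_card_edgeSet [Finite α] [Finite V]
    (hG : ArrowsFor G H r) (hr : 2 ≤ r) (hH : 1 < Nat.card H.edgeSet) (hγ : 0 < γ) :
    ∃ a : ℝ, 0 < a ∧ ∀ t n : ℕ, 0 < t →
      a * ((r : ℝ) ^ ((r : ℝ) + γ) ^ (Nat.card H.edgeSet - 1)) ^ t ≤ n → BlowupArrow G H r n t := by
  cases nonempty_fintype α
  obtain ⟨⟨e, he⟩⟩ := (Nat.card_pos_iff.1 (by omega : 0 < Nat.card H.edgeSet)).1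
  induction e using Sym2.ind with | h v w
  have hr₁ : (1 : ℝ) < r := by exact_mod_cast hr
  obtain ⟨η, hη, hη₁, hb⟩ := exists_inv_rpow_inv_le hr₁ hγ
    (Nat.sub_ne_zero_of_lt hH) (Fintype.card α)
  obtain ⟨D, hD, harrow⟩ := hG.exists_forall_blowupArrow hr he hη hη₁
  have hη' : 0 < 1 - η := by linarith
  set p := (r : ℝ)⁻¹ * (1 - η) * (1 - η)
  set q := ((r : ℝ)⁻¹ * (1 - η)) ^ (Nat.card H.edgeSet - 1) * ((1 - η) ^ 2) ^ Fintype.card α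
  have hq : 0 < q := by positivity
  have hp : 0 < p := by positivity
  have hp₁ : 1 ≤ p⁻¹ := (one_le_inv₀ hp).2 (mul_le_one₀ (mul_le_one₀
    (inv_le_one_of_one_le₀ hr₁.le) hη'.le (by linarith)) hη'.le (by linarith))
  refine ⟨D * p⁻¹, by positivity, fun t n ht hn => ?_⟩
  have : (0 : ℝ) < t := by exact_mod_cast ht
  refine harrow t ⌈q⁻¹ * t⌉₊ n (Nat.ceil_pos.2 (by positivity)) (.trans ?_ hn) ?_
  · rw [mul_assoc]
    gcongr
    calc p⁻¹ ^ ⌈q⁻¹ * t⌉₊ = p⁻¹ ^ (⌈q⁻¹ * t⌉₊ : ℝ) := (Real.rpow_natCast _ _).symm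
      _ ≤ p⁻¹ ^ (1 + q⁻¹ * t) := by
        refine Real.rpow_le_rpow_of_exponent_le hp₁ ?_
        linarith [Nat.ceil_lt_add_one (show 0 ≤ q⁻¹ * t by positivity)]
      _ = p⁻¹ * (p⁻¹ ^ q⁻¹) ^ t := by
        rw [Real.rpow_add (by positivity), Real.rpow_one, Real.rpow_mul (by positivity),
          Real.rpow_natCast]
      _ ≤ _ := by gcongr
  · calc (t : ℝ) = q * (q⁻¹ * t) := by field_simp
      _ ≤ q * ⌈q⁻¹ * t⌉₊ := by gcongr; exact Nat.le_ceil _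

end BlowupRamsey

end

theorem blowup_ramsey_explicit_base_general (r : ℕ) (hr : 2 ≤ r) (γ : ℝ) (hγ : 0 < γ)
    (α V : Type) [Finite α] [Finite V] (H : SimpleGraph α) (G : SimpleGraph V)
    (hH : ∃ x y, H.Adj x y) (hG : ArrowsFor G H r) :
    ∃ a : ℝ, 0 < a ∧ ∀ t : ℕ, 1 ≤ t →
      ∃ n : ℕ,
        (n : ℝ) ≤ a * ((r : ℝ) ^ (((r : ℝ) + γ) ^ (Nat.card H.edgeSet - 1))) ^ t ∧
        BlowupArrow G H r n t := by
  obtain ⟨v, w, hvw⟩ := hH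
  set b := (r : ℝ) ^ (((r : ℝ) + γ) ^ (Nat.card H.edgeSet - 1))
  have hb : 1 ≤ b := Real.one_le_rpow (by exact_mod_cast one_le_two.trans hr) (by positivity)
  obtain ⟨a, ha, harrow⟩ : ∃ a : ℝ, 0 < a ∧
      ∀ t n : ℕ, 0 < t → a * b ^ t ≤ n → BlowupArrow G H r n t := by
    obtain hcard | hcard := le_or_gt (Nat.card H.edgeSet) 1
    · simpa only [b, Nat.sub_eq_zero_of_le hcard, pow_zero, Real.rpow_one] using
        hG.exists_forall_blowupArrow_of_card_edgeSet_le_one hr hvw hcard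
    · exact hG.exists_forall_blowupArrow_of_one_lt_card_edgeSet hr hcard hγ
  exact ⟨a + 1, by positivity, fun t ht =>
    exists_natCast_le_add_one_mul (by positivity) (one_le_pow₀ hb) fun n => harrow t n ht⟩

/-- the "moreover" part of Theorem 1.2. For `γ > 0` sufficiently small with
respect to `r`, one may take `b = r^((r+γ)^(|E(H)|-1))` in the bound `B_r(G → H; t) ≤ a · b^t`,
for a constant `a = a(G,H,r,γ)`. -/
theorem blowup_ramsey_explicit_base (r : ℕ) (hr : 2 ≤ r) :
    ∃ γ₀ : ℝ, 0 < γ₀ ∧ ∀ γ : ℝ, 0 < γ → γ ≤ γ₀ →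
      ∀ (α V : Type) [Fintype α] [Fintype V] (H : SimpleGraph α) (G : SimpleGraph V),
        (∃ x y, H.Adj x y) → ArrowsFor G H r →
        ∃ a : ℝ, 0 < a ∧ ∀ t : ℕ, 1 ≤ t →
          ∃ n : ℕ,
            (n : ℝ) ≤ a * ((r : ℝ) ^ (((r : ℝ) + γ) ^ (Nat.card H.edgeSet - 1))) ^ t ∧
            BlowupArrow G H r n t := by
  exact ⟨1, one_pos, fun γ hγ _ α V _ _ H G hH hG =>
    blowup_ramsey_explicit_base_general r hr γ hγ α V H G hH hG⟩
end
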